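/- arXiv:1204.0931 — 4 statements merged into one kernel-verified Lean document; each statement's English description precedes it below -/
import Mathlib

section
/- Let Ω ⊆ ℝⁿ bounded convex open with 0 ∈ Ω, and u = f(μ_Ω) with f convex increasing smooth and f(1) = 0. Define the Monge-Ampère energy E(u) = ∫_Ω (-u) det(D²u) dx. Then E(u) = |Ω°| · ∫_0^1 f'(s)^{n+1} ds. -/
/-!
Write `G = ∇u` and, for `0 < s < 1`, `K s = {x | gauge Ω x ≤ s}`, a compact subset of `Ω`.

The geometric heart is `gradient_image`: `G '' K s = f'(s) • Ω°`. For `x ∈ K s` and `z ∈ Ω`, convexity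
of `u` and subadditivity of the gauge bound `⟪G x, z⟫` by `f'(s')` for every `s' ∈ (s, 1)`, hence by
`f'(s)`. Conversely, if `⟪y, ·⟫ ≤ f'(s) * gauge Ω ·`, then a minimiser of `u - ⟪y, ·⟫` over `K s`
also minimises it over `Ω`, because outside `K s` retracting radially onto `gauge Ω = s` does not
increase it (the tangent line of `f` at `s` lies below `f`); so `G = y` at that minimiser. This
argument does not involve `f''` and treats the origin like any other point.

Strict convexity makes `G` injective on `Ω` and its Jacobian determinant `hessDet u` nonnegative, so
the change of variables formula gives `∫_{K s} hessDet u = |G '' K s| = f'(s)^n |Ω°|`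
(`lintegral_hessDet_sublevel`). Finally `-u(x) = ∫_{gauge Ω x}^1 f'(s) ds`, and the layer-cake formula
for the measure `hessDet u dx` turns the energy into `∫₀¹ f'(s) * f'(s)^n |Ω°| ds`. The integrals are
handled as lower Lebesgue integrals, so no integrability has to be established separately.
-/

open MeasureTheory
open scoped RealInnerProductSpace

/-- The polar body of a set in Euclidean space. -/
def polarBody {n : ℕ} (Ω : Set (EuclideanSpace ℝ (Fin n))) : Set (EuclideanSpace ℝ (Fin n)) :=
  {y | ∀ x ∈ Ω, ⟪x, y⟫ ≤ 1}

/-- The determinant of the Hessian matrix of `u` at `x`. -/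
noncomputable def hessDet {n : ℕ} (u : EuclideanSpace ℝ (Fin n) → ℝ) (x : EuclideanSpace ℝ (Fin n)) : ℝ :=
  (Matrix.of fun i j =>
    iteratedFDeriv ℝ 2 u x ![EuclideanSpace.single i 1, EuclideanSpace.single j 1]).det

open Set Filter Topology
open scoped Pointwise

/-! ### Gradients of convex functions -/

lemma inner_grad {n : ℕ} (u : EuclideanSpace ℝ (Fin n) → ℝ) (x v : EuclideanSpace ℝ (Fin n)) :
    ⟪gradient u x, v⟫ = fderiv ℝ u x v := by
  simp [gradient]

/-- The graph of a convex function lies above its tangent planes. -/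
lemma ConvexOn.fderiv_sub_le {n : ℕ} {Ω : Set (EuclideanSpace ℝ (Fin n))}
    {u : EuclideanSpace ℝ (Fin n) → ℝ} (hu : ConvexOn ℝ Ω u) {x y : EuclideanSpace ℝ (Fin n)}
    (hx : x ∈ Ω) (hy : y ∈ Ω) (hd : DifferentiableAt ℝ u x) :
    fderiv ℝ u x (y - x) ≤ u y - u x := by
  have hφ := hu.comp_affineMap (AffineMap.lineMap (k := ℝ) x y)
  have hder : HasDerivAt (u ∘ AffineMap.lineMap (k := ℝ) x y) (fderiv ℝ u x (y - x)) 0 := by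
    refine HasFDerivAt.comp_hasDerivAt (0 : ℝ) ?_ AffineMap.hasDerivAt_lineMap
    simpa using hd.hasFDerivAt
  have := hφ.le_slope_of_hasDerivAt (x := 0) (y := 1) (by simpa) (by simpa) one_pos hder
  simpa [slope_def_field] using this

/-- The strict form of `ConvexOn.fderiv_sub_le`, obtained by applying the latter between `x` and the
midpoint of `x` and `y`. -/
lemma StrictConvexOn.fderiv_sub_lt {n : ℕ} {Ω : Set (EuclideanSpace ℝ (Fin n))}
    {u : EuclideanSpace ℝ (Fin n) → ℝ} (hu : StrictConvexOn ℝ Ω u)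
    {x y : EuclideanSpace ℝ (Fin n)} (hx : x ∈ Ω) (hy : y ∈ Ω) (hxy : x ≠ y)
    (hd : DifferentiableAt ℝ u x) :
    fderiv ℝ u x (y - x) < u y - u x := by
  have hmid := hu.2 hx hy hxy one_half_pos one_half_pos (add_halves (1 : ℝ))
  have hm : (1 / 2 : ℝ) • x + (1 / 2 : ℝ) • y ∈ Ω :=
    hu.1 hx hy (by norm_num) (by norm_num) (by norm_num)
  have h := hu.convexOn.fderiv_sub_le hx hm hd
  have e : (1 / 2 : ℝ) • x + (1 / 2 : ℝ) • y - x = (1 / 2 : ℝ) • (y - x) := by module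
  rw [e, map_smul] at h
  simp only [smul_eq_mul] at h hmid
  linarith

/-- The gradient of a strictly convex function is strictly monotone. -/
lemma StrictConvexOn.inner_gradient_sub_pos {n : ℕ} {Ω : Set (EuclideanSpace ℝ (Fin n))}
    {u : EuclideanSpace ℝ (Fin n) → ℝ} (hu : StrictConvexOn ℝ Ω u)
    (hd : ∀ x ∈ Ω, DifferentiableAt ℝ u x)
    {x y : EuclideanSpace ℝ (Fin n)} (hx : x ∈ Ω) (hy : y ∈ Ω) (hxy : x ≠ y) :
    0 < ⟪gradient u y - gradient u x, y - x⟫ := by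
  have h1 := hu.fderiv_sub_lt hx hy hxy (hd x hx)
  have h2 := hu.fderiv_sub_lt hy hx hxy.symm (hd y hy)
  rw [inner_sub_left, inner_grad, inner_grad]
  rw [← neg_sub y x, map_neg] at h2
  linarith

lemma StrictConvexOn.injOn_gradient {n : ℕ} {Ω : Set (EuclideanSpace ℝ (Fin n))}
    {u : EuclideanSpace ℝ (Fin n) → ℝ} (hu : StrictConvexOn ℝ Ω u)
    (hd : ∀ x ∈ Ω, DifferentiableAt ℝ u x) : InjOn (gradient u) Ω := by
  intro x hx y hy hxy
  by_contra hne
  have := hu.inner_gradient_sub_pos hd hx hy hne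
  simp [hxy] at this

/-! ### The Hessian determinant -/

/-- The inverse Riesz map as a real-linear map; `InnerProductSpace.toDual` is only bundled as a
conjugate-linear one. -/
noncomputable def rieszInv (n : ℕ) :
    (EuclideanSpace ℝ (Fin n) →L[ℝ] ℝ) →L[ℝ] EuclideanSpace ℝ (Fin n) :=
  LinearMap.toContinuousLinearMap
    { toFun := fun l => (InnerProductSpace.toDual ℝ (EuclideanSpace ℝ (Fin n))).symm l
      map_add' := fun a b => map_add _ a b
      map_smul' := fun c a => by simp }

lemma inner_rieszInv {n : ℕ} (l : EuclideanSpace ℝ (Fin n) →L[ℝ] ℝ)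
    (v : EuclideanSpace ℝ (Fin n)) : ⟪rieszInv n l, v⟫ = l v := by
  simp [rieszInv]

lemma hasFDerivAt_gradient {n : ℕ} {u : EuclideanSpace ℝ (Fin n) → ℝ}
    {x : EuclideanSpace ℝ (Fin n)} (hu : ContDiffAt ℝ 2 u x) :
    HasFDerivAt (gradient u) ((rieszInv n).comp (fderiv ℝ (fderiv ℝ u) x)) x := by
  have h : DifferentiableAt ℝ (fderiv ℝ u) x :=
    (hu.fderiv_right (m := 1) (by norm_num)).differentiableAt (by norm_num)
  exact (rieszInv n).hasFDerivAt.comp x h.hasFDerivAt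

/-- The Hessian determinant is the Jacobian determinant of the gradient map. -/
lemma det_fderiv_gradient {n : ℕ} {u : EuclideanSpace ℝ (Fin n) → ℝ}
    {x : EuclideanSpace ℝ (Fin n)} (hu : ContDiffAt ℝ 2 u x) :
    (fderiv ℝ (gradient u) x).det = hessDet u x := by
  rw [(hasFDerivAt_gradient hu).fderiv, ContinuousLinearMap.det,
    ← LinearMap.det_toMatrix (EuclideanSpace.basisFun (Fin n) ℝ).toBasis, hessDet,
    ← Matrix.det_transpose]
  congr 1
  ext i j
  simp only [Matrix.transpose_apply, LinearMap.toMatrix_apply, Matrix.of_apply,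
    iteratedFDeriv_two_apply]
  rw [OrthonormalBasis.coe_toBasis_repr_apply, OrthonormalBasis.repr_apply_apply]
  rw [real_inner_comm]
  simp [inner_rieszInv]

/-- Monotonicity of the gradient makes the Hessian positive semidefinite. -/
lemma hessDet_nonneg {n : ℕ} {Ω : Set (EuclideanSpace ℝ (Fin n))} (hΩ : IsOpen Ω)
    {u : EuclideanSpace ℝ (Fin n) → ℝ} (hu : StrictConvexOn ℝ Ω u)
    (husm : ∀ x ∈ Ω, ContDiffAt ℝ 2 u x) {x : EuclideanSpace ℝ (Fin n)} (hx : x ∈ Ω) :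
    0 ≤ hessDet u x := by
  have hd : ∀ x ∈ Ω, DifferentiableAt ℝ u x := fun y hy => (husm y hy).differentiableAt (by norm_num)
  have hpos : ∀ v, 0 ≤ fderiv ℝ (fderiv ℝ u) x v v := by
    intro v
    have hG := hasFDerivAt_gradient (husm x hx)
    have hline : HasDerivAt (fun t : ℝ => x + t • v) v 0 := by
      simpa using ((hasDerivAt_id (0 : ℝ)).smul_const v).const_add x
    have hG' : HasFDerivAt (gradient u)
        ((rieszInv n).comp (fderiv ℝ (fderiv ℝ u) x)) (x + (0 : ℝ) • v) := by simpa using hG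
    have hl : HasDerivAt (fun t : ℝ => ⟪gradient u (x + t • v), v⟫)
        (fderiv ℝ (fderiv ℝ u) x v v) 0 := by
      have := (HasFDerivAt.comp_hasDerivAt (0 : ℝ) hG' hline).inner ℝ (hasDerivAt_const (0 : ℝ) v)
      simpa [inner_rieszInv] using this
    have hmem : ∀ᶠ t : ℝ in 𝓝[≠] 0, x + t • v ∈ Ω := by
      apply eventually_nhdsWithin_of_eventually_nhds
      have h0 : Ω ∈ 𝓝 (x + (0 : ℝ) • v) := hΩ.mem_nhds (by simpa using hx)
      exact hline.continuousAt.eventually h0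
    refine ge_of_tendsto (hasDerivAt_iff_tendsto_slope.1 hl) ?_
    filter_upwards [hmem, self_mem_nhdsWithin] with t ht ht0
    have ht0 : t ≠ 0 := ht0
    have key : 0 ≤ ⟪gradient u (x + t • v) - gradient u x, t • v⟫ := by
      rcases eq_or_ne x (x + t • v) with h | h
      · rw [← h]; simp
      · have := (hu.inner_gradient_sub_pos hd hx ht h).le
        rwa [add_sub_cancel_left] at this
    rw [inner_smul_right, inner_sub_left] at key
    rw [slope_def_field]
    simp only [zero_smul, add_zero, sub_zero]
    have : (⟪gradient u (x + t • v), v⟫ - ⟪gradient u x, v⟫) / t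
        = t * (⟪gradient u (x + t • v), v⟫ - ⟪gradient u x, v⟫) / t ^ 2 := by
      field_simp
    rw [this]
    positivity
  have hsymm : IsSymmSndFDerivAt ℝ u x := (husm x hx).isSymmSndFDerivAt (by simp)
  apply Matrix.PosSemidef.det_nonneg
  refine Matrix.PosSemidef.of_dotProduct_mulVec_nonneg ?_ ?_
  · ext i j
    simp [iteratedFDeriv_two_apply, hsymm.eq (EuclideanSpace.single i 1)]
  · intro w
    have hw : WithLp.toLp 2 w = ∑ i, w i • EuclideanSpace.single i (1 : ℝ) := by
      ext j
      simp [Pi.single_apply]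
    have h := hpos (WithLp.toLp 2 w)
    rw [hw] at h
    simp only [map_sum, map_smul, sum_apply, smul_apply,
      smul_eq_mul] at h
    refine h.trans_eq ?_
    simp only [dotProduct, Matrix.mulVec, Matrix.of_apply, iteratedFDeriv_two_apply,
      Finset.mul_sum, Pi.star_apply, star_trivial, Matrix.cons_val_zero, Matrix.cons_val_one]
    refine Finset.sum_congr rfl fun i _ => Finset.sum_congr rfl fun j _ => ?_
    rw [hsymm.eq (EuclideanSpace.single i 1)]
    ring

/-! ### Gradient images of gauge sublevel sets -/

/-- The gradient map carries the sublevel set `{μ_Ω ≤ s}` exactly onto the dilate `f'(s) • Ω°`. -/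
lemma gradient_image {n : ℕ} {Ω : Set (EuclideanSpace ℝ (Fin n))}
    (hΩo : IsOpen Ω) (hΩc : Convex ℝ Ω) (hΩb : Bornology.IsBounded Ω)
    (h0 : (0 : EuclideanSpace ℝ (Fin n)) ∈ Ω)
    {f : ℝ → ℝ} (hfc : ConvexOn ℝ (Icc 0 1) f) (hfm : StrictMonoOn f (Icc 0 1))
    (hfd : ∀ s ∈ Ioo (0 : ℝ) 1, DifferentiableAt ℝ f s)
    (hfd' : ContinuousOn (deriv f) (Ioo (0 : ℝ) 1))
    {u : EuclideanSpace ℝ (Fin n) → ℝ} (hu : ∀ x, u x = f (gauge Ω x))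
    (hud : ∀ x ∈ Ω, DifferentiableAt ℝ u x) (hconv : ConvexOn ℝ Ω u)
    {s : ℝ} (hs : s ∈ Ioo (0 : ℝ) 1) (hpos : 0 < deriv f s) :
    gradient u '' {x | gauge Ω x ≤ s} = deriv f s • polarBody Ω := by
  have hn : Ω ∈ 𝓝 0 := hΩo.mem_nhds h0
  have habs : Absorbent ℝ Ω := absorbent_nhds_zero hn
  have hmem : ∀ x, gauge Ω x < 1 ↔ x ∈ Ω := by
    intro x
    rw [gauge_lt_one_iff_mem_interior hΩc hn, hΩo.interior_eq]
  ext y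
  rw [mem_smul_set_iff_inv_smul_mem₀ hpos.ne']
  constructor
  · rintro ⟨x, hx, rfl⟩ z hz
    have hx : gauge Ω x ≤ s := hx
    have hxΩ : x ∈ Ω := (hmem x).1 (hx.trans_lt hs.2)
    rw [inner_smul_right, real_inner_comm, inner_grad, inv_mul_le_one₀ hpos]
    have hr : gauge Ω x ∈ Icc (0 : ℝ) 1 := ⟨gauge_nonneg x, hx.trans hs.2.le⟩
    have hcont : Tendsto (deriv f) (𝓝[>] s) (𝓝 (deriv f s)) :=
      ((hfd'.continuousAt (isOpen_Ioo.mem_nhds hs)).tendsto).mono_left nhdsWithin_le_nhds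
    refine ge_of_tendsto hcont ?_
    filter_upwards [Ioo_mem_nhdsGT hs.2] with s' hs'
    have hs1 : s' ∈ Ioo (0 : ℝ) 1 := ⟨hs.1.trans hs'.1, hs'.2⟩
    have hrs : gauge Ω x < s' := hx.trans_lt hs'.1
    have hτ : 0 < s' - gauge Ω x := sub_pos.2 hrs
    have hg : gauge Ω (x + (s' - gauge Ω x) • z) ≤ s' := by
      refine (gauge_add_le hΩc habs _ _).trans ?_
      rw [gauge_smul_of_nonneg hτ.le, smul_eq_mul]
      have := mul_le_mul_of_nonneg_left (gauge_le_one_of_mem hz) hτ.le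
      linarith
    have h1 := hconv.fderiv_sub_le hxΩ ((hmem _).1 (hg.trans_lt hs1.2)) (hud x hxΩ)
    rw [add_sub_cancel_left, map_smul, smul_eq_mul, hu, hu] at h1
    have h2 := hfm.monotoneOn ⟨gauge_nonneg _, hg.trans hs1.2.le⟩ ⟨hs1.1.le, hs1.2.le⟩ hg
    have h3 := hfc.slope_le_deriv hr ⟨hs1.1.le, hs1.2.le⟩ hrs (hfd s' hs1)
    refine le_trans ?_ h3
    rw [slope_def_field, le_div_iff₀ hτ]
    linarith
  · intro hy
    have hyx : ∀ x, ⟪y, x⟫ ≤ deriv f s * gauge Ω x := by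
      intro x
      refine le_of_forall_pos_le_add fun ε hε => ?_
      -- the infimum defining the gauge is approached by some `b` with `x ∈ b • Ω`
      obtain ⟨b, hb0, hbx, hb⟩ := exists_lt_of_gauge_lt habs
        (lt_add_of_pos_right (gauge Ω x) (div_pos hε hpos))
      obtain ⟨z, hz, rfl⟩ := hb
      have h := hy z hz
      rw [inner_smul_right, inv_mul_le_one₀ hpos, real_inner_comm] at h
      beta_reduce at hbx ⊢
      rw [inner_smul_right]
      have h4 := mul_le_mul_of_nonneg_left h hb0.le
      have h5 := mul_le_mul_of_nonneg_left hbx.le hpos.le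
      rw [mul_add, mul_div_cancel₀ _ hpos.ne'] at h5
      linarith
    have hcg : Continuous (gauge Ω) := continuous_gauge hΩc hn
    have hK : IsCompact {x | gauge Ω x ≤ s} := by
      refine Metric.isCompact_of_isClosed_isBounded (isClosed_le hcg continuous_const)
        (hΩb.subset fun x hx => (hmem x).1 (lt_of_le_of_lt hx hs.2))
    have hKΩ : {x | gauge Ω x ≤ s} ⊆ Ω := fun x hx => (hmem x).1 (lt_of_le_of_lt hx hs.2)
    have hcu : ContinuousOn (fun x => u x - ⟪y, x⟫) {x | gauge Ω x ≤ s} := by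
      refine ContinuousOn.sub (fun x hx => (hud x (hKΩ hx)).continuousAt.continuousWithinAt) ?_
      fun_prop
    obtain ⟨x₀, hx₀, hmin⟩ := hK.exists_isMinOn ⟨0, by simpa using hs.1.le⟩ hcu
    refine ⟨x₀, hx₀, ?_⟩
    have hx₀Ω := hKΩ hx₀
    -- outside the sublevel set, moving radially inwards does not increase `u - ⟪y, ·⟫`
    have hminΩ : ∀ x ∈ Ω, u x₀ - ⟪y, x₀⟫ ≤ u x - ⟪y, x⟫ := by
      intro x hx
      rcases le_or_gt (gauge Ω x) s with hxs | hxs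
      · exact hmin hxs
      · have hr0 : 0 < gauge Ω x := hs.1.trans hxs
        have hr1 : gauge Ω x < 1 := (hmem x).2 hx
        have hgs : gauge Ω ((s / gauge Ω x) • x) = s := by
          rw [gauge_smul_of_nonneg (by have := hs.1; positivity), smul_eq_mul]
          field_simp
        have h1 : u x₀ - ⟪y, x₀⟫ ≤ u ((s / gauge Ω x) • x) - ⟪y, (s / gauge Ω x) • x⟫ :=
          hmin (show gauge Ω _ ≤ s from hgs.le)
        rw [hu ((s / gauge Ω x) • x), hgs, inner_smul_right] at h1
        have h2 := hfc.deriv_le_slope ⟨hs.1.le, hs.2.le⟩ ⟨hr0.le, hr1.le⟩ hxs (hfd s hs)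
        rw [slope_def_field, le_div_iff₀ (sub_pos.2 hxs)] at h2
        have h3 : (1 - s / gauge Ω x) * ⟪y, x⟫ ≤ deriv f s * (gauge Ω x - s) := by
          have h4 : 0 ≤ 1 - s / gauge Ω x := by
            rw [sub_nonneg, div_le_one hr0]; exact hxs.le
          refine (mul_le_mul_of_nonneg_left (hyx x) h4).trans_eq ?_
          field_simp
        rw [hu x]
        linarith
    have hloc : IsLocalMin (fun x => u x - ⟪y, x⟫) x₀ := by
      filter_upwards [hΩo.mem_nhds hx₀Ω] with x hx using hminΩ x hx
    have hder : HasFDerivAt (fun x => u x - ⟪y, x⟫) (fderiv ℝ u x₀ - innerSL ℝ y) x₀ :=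
      (hud x₀ hx₀Ω).hasFDerivAt.sub (innerSL ℝ y).hasFDerivAt
    have hz := hloc.hasFDerivAt_eq_zero hder
    refine ext_inner_right ℝ fun v => ?_
    rw [inner_grad, sub_eq_zero.1 hz]
    simp

lemma measurable_hessDet {n : ℕ} (u : EuclideanSpace ℝ (Fin n) → ℝ) : Measurable (hessDet u) := by
  have h : ∀ v w, Measurable fun x => fderiv ℝ (fderiv ℝ u) x v w := fun v w =>
    (measurable_fderiv_apply_const ℝ (fderiv ℝ u) v).apply_continuousLinearMap w
  unfold hessDet
  simp only [Matrix.det_apply, Matrix.of_apply, iteratedFDeriv_two_apply]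
  exact Finset.measurable_sum _ fun σ _ =>
    (Finset.measurable_prod _ fun i _ => h _ _).const_smul _

/-- The Monge-Ampère mass of a sublevel set of the gauge is the volume of its gradient image. -/
lemma lintegral_hessDet_sublevel {n : ℕ} {Ω : Set (EuclideanSpace ℝ (Fin n))}
    (hΩo : IsOpen Ω) (hΩc : Convex ℝ Ω) (hΩb : Bornology.IsBounded Ω)
    (h0 : (0 : EuclideanSpace ℝ (Fin n)) ∈ Ω)
    {f : ℝ → ℝ} (hfc : ConvexOn ℝ (Icc 0 1) f) (hfm : StrictMonoOn f (Icc 0 1))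
    (hfd : ∀ s ∈ Ioo (0 : ℝ) 1, DifferentiableAt ℝ f s)
    (hfd' : ContinuousOn (deriv f) (Ioo (0 : ℝ) 1))
    {u : EuclideanSpace ℝ (Fin n) → ℝ} (hu : ∀ x, u x = f (gauge Ω x))
    (husm : ∀ x ∈ Ω, ContDiffAt ℝ 2 u x) (hconv : StrictConvexOn ℝ Ω u)
    {s : ℝ} (hs : s ∈ Ioo (0 : ℝ) 1) (hpos : 0 < deriv f s) :
    ∫⁻ x in {x | gauge Ω x ≤ s}, ENNReal.ofReal (hessDet u x) =
      ENNReal.ofReal (deriv f s ^ n) * volume (polarBody Ω) := by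
  have hn : Ω ∈ 𝓝 0 := hΩo.mem_nhds h0
  have hd : ∀ x ∈ Ω, DifferentiableAt ℝ u x :=
    fun x hx => (husm x hx).differentiableAt (by norm_num)
  have hKΩ : {x | gauge Ω x ≤ s} ⊆ Ω := by
    intro x hx
    rw [← hΩo.interior_eq, ← gauge_lt_one_iff_mem_interior hΩc hn]
    exact lt_of_le_of_lt hx hs.2
  have hKm : MeasurableSet {x | gauge Ω x ≤ s} :=
    (isClosed_le (continuous_gauge hΩc hn) continuous_const).measurableSet
  calc ∫⁻ x in {x | gauge Ω x ≤ s}, ENNReal.ofReal (hessDet u x)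
      = ∫⁻ x in {x | gauge Ω x ≤ s}, ENNReal.ofReal |(fderiv ℝ (gradient u) x).det| := by
        refine setLIntegral_congr_fun hKm fun x hx => ?_
        rw [det_fderiv_gradient (husm x (hKΩ hx)),
          abs_of_nonneg (hessDet_nonneg hΩo hconv husm (hKΩ hx))]
    _ = volume (gradient u '' {x | gauge Ω x ≤ s}) :=
        lintegral_abs_det_fderiv_eq_addHaar_image volume hKm
          (fun x hx => ((hasFDerivAt_gradient (husm x (hKΩ hx))).differentiableAt.hasFDerivAt
            ).hasFDerivWithinAt) ((hconv.injOn_gradient hd).mono hKΩ)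
    _ = _ := by
        rw [gradient_image hΩo hΩc hΩb h0 hfc hfm hfd hfd' hu hd hconv.convexOn hs hpos,
          Measure.addHaar_smul, finrank_euclideanSpace_fin, abs_of_nonneg (by positivity)]

/-! ### The energy -/

/-- The Monge–Ampère energy of `u = f ∘ μ_Ω` equals `|Ω°| ∫₀¹ f'(s)^(n+1) ds`. -/
theorem energy_formula (n : ℕ) (Ω : Set (EuclideanSpace ℝ (Fin n)))
    (hΩo : IsOpen Ω) (hΩc : Convex ℝ Ω) (hΩb : Bornology.IsBounded Ω)
    (h0 : (0 : EuclideanSpace ℝ (Fin n)) ∈ Ω)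
    (f : ℝ → ℝ) (hf : ContDiffOn ℝ (⊤ : ℕ∞) f (Set.Icc 0 1)) (hfc : ConvexOn ℝ (Set.Icc 0 1) f)
    (hfm : StrictMonoOn f (Set.Icc 0 1)) (hf1 : f 1 = 0)
    (u : EuclideanSpace ℝ (Fin n) → ℝ) (hu : ∀ x, u x = f (gauge Ω x))
    (husm : ContDiffOn ℝ (⊤ : ℕ∞) u Ω) (hconv : StrictConvexOn ℝ Ω u) :
    ∫ x in Ω, (-(u x)) * hessDet u x =
      (volume (polarBody Ω)).toReal * ∫ s in (0 : ℝ)..1, (deriv f s) ^ (n + 1) := by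
  have hn : Ω ∈ 𝓝 0 := hΩo.mem_nhds h0
  have husm2 : ∀ x ∈ Ω, ContDiffAt ℝ 2 u x := fun x hx =>
    (husm.contDiffAt (hΩo.mem_nhds hx)).of_le (WithTop.coe_le_coe.2 le_top)
  have hfI : ContDiffOn ℝ 1 f (Ioo 0 1) :=
    (hf.mono Ioo_subset_Icc_self).of_le (by exact_mod_cast le_top)
  have hfd : ∀ s ∈ Ioo (0 : ℝ) 1, DifferentiableAt ℝ f s := fun s hs =>
    (hfI.contDiffAt (isOpen_Ioo.mem_nhds hs)).differentiableAt (by norm_num)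
  have hfd' : ContinuousOn (deriv f) (Ioo (0 : ℝ) 1) :=
    hfI.continuousOn_deriv_of_isOpen isOpen_Ioo le_rfl
  have hpos : ∀ s ∈ Ioo (0 : ℝ) 1, 0 < deriv f s := by
    intro s hs
    have h1 := hfc.slope_le_deriv (left_mem_Icc.2 zero_le_one) (Ioo_subset_Icc_self hs) hs.1
      (hfd s hs)
    refine lt_of_lt_of_le ?_ h1
    rw [slope_def_field]
    exact div_pos (sub_pos.2 (hfm (left_mem_Icc.2 zero_le_one) (Ioo_subset_Icc_self hs) hs.1))
      (sub_pos.2 hs.1)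
  have hrefl : ∀ t ∈ Ioo (0 : ℝ) 1, 1 - t ∈ Ioo (0 : ℝ) 1 := fun t ht =>
    ⟨by linarith [ht.2], by linarith [ht.1]⟩
  have hgauge : ∀ x ∈ Ω, gauge Ω x ∈ Ico (0 : ℝ) 1 := fun x hx =>
    ⟨gauge_nonneg x, gauge_lt_one_of_mem_of_isOpen hΩo hx⟩
  -- the layer-cake weight in the variable `t = 1 - s`
  set g : ℝ → ℝ := (Ioo (0 : ℝ) 1).indicator fun t => deriv f (1 - t) with hg
  have hF : ContinuousOn (fun t => -f (1 - t)) (Icc 0 1) :=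
    (hf.continuousOn.comp (by fun_prop) fun t ht => ⟨by linarith [ht.2], by linarith [ht.1]⟩).neg
  have hF' : ∀ t ∈ Ioo (0 : ℝ) 1, HasDerivAt (fun t => -f (1 - t)) (deriv f (1 - t)) t := by
    intro t ht
    have := ((hfd _ (hrefl t ht)).hasDerivAt.comp t ((hasDerivAt_id t).const_sub 1)).neg
    simpa [Function.comp_def, Pi.neg_def] using this
  have hgI : Integrable g := by
    rw [hg, integrable_indicator_iff measurableSet_Ioo]
    exact (intervalIntegral.integrableOn_deriv_of_nonneg hF hF'
      fun t ht => (hpos _ (hrefl t ht)).le).mono_set Ioo_subset_Ioc_self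
  have hg0 : ∀ t, 0 ≤ g t := fun t => indicator_nonneg (fun t ht => (hpos _ (hrefl t ht)).le) t
  have hFTC : ∀ x ∈ Ω, ∫ t in (0 : ℝ)..(1 - gauge Ω x), g t = -u x := by
    intro x hx
    obtain ⟨hr0, hr1⟩ := hgauge x hx
    rw [intervalIntegral.integral_eq_sub_of_hasDerivAt_of_le (f := fun t => -f (1 - t))
      (by linarith) (hF.mono (Icc_subset_Icc_right (by linarith))) ?_ hgI.intervalIntegrable]
    · simp [hf1, hu]
    · intro t ht
      have ht1 : t ∈ Ioo (0 : ℝ) 1 := ⟨ht.1, by linarith [ht.2]⟩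
      rw [hg, indicator_of_mem ht1]
      exact hF' t ht1
  have hu0 : ∀ x ∈ Ω, 0 ≤ -u x := fun x hx => by
    rw [← hFTC x hx]
    exact intervalIntegral.integral_nonneg (by linarith [(hgauge x hx).2]) fun t _ => hg0 t
  have huc : ContinuousOn u Ω := husm.continuousOn
  have hΩm := hΩo.measurableSet
  have hcg : Continuous (gauge Ω) := continuous_gauge hΩc hn
  set ν : Measure (EuclideanSpace ℝ (Fin n)) :=
    (volume.restrict Ω).withDensity fun x => ENNReal.ofReal (hessDet u x) with hν
  have hHm : Measurable fun x => ENNReal.ofReal (hessDet u x) := (measurable_hessDet u).ennreal_ofReal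
  have hum : AEMeasurable u (volume.restrict Ω) := huc.aemeasurable hΩm
  -- the energy as an integral against the Monge-Ampère measure
  have h1 : ∫⁻ x in Ω, ENNReal.ofReal (-(u x) * hessDet u x) =
      ∫⁻ x, ENNReal.ofReal (∫ t in (0 : ℝ)..(1 - gauge Ω x), g t) ∂ν := by
    have hae : (fun x => ENNReal.ofReal (-u x)) =ᵐ[volume.restrict Ω]
        fun x => ENNReal.ofReal (∫ t in (0 : ℝ)..(1 - gauge Ω x), g t) := by
      filter_upwards [ae_restrict_mem hΩm] with x hx
      rw [hFTC x hx]
    rw [hν, lintegral_withDensity_eq_lintegral_mul₀ hHm.aemeasurable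
      (hum.neg.ennreal_ofReal.congr hae)]
    refine setLIntegral_congr_fun hΩm fun x hx => ?_
    simp only [Pi.mul_apply]
    rw [hFTC x hx, ENNReal.ofReal_mul (hu0 x hx), mul_comm]
  have hνK : ∀ t ∈ Ioo (0 : ℝ) 1, ν {x | t ≤ 1 - gauge Ω x} =
      ENNReal.ofReal (deriv f (1 - t) ^ n) * volume (polarBody Ω) := by
    intro t ht
    have hset : {x | t ≤ 1 - gauge Ω x} = {x | gauge Ω x ≤ 1 - t} := by
      ext x; simp only [mem_ofPred_eq]; exact le_sub_comm
    have hKm : MeasurableSet {x | gauge Ω x ≤ 1 - t} :=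
      (isClosed_le hcg continuous_const).measurableSet
    have hKΩ : {x | gauge Ω x ≤ 1 - t} ⊆ Ω := by
      intro x hx
      rw [← hΩo.interior_eq, ← gauge_lt_one_iff_mem_interior hΩc hn]
      exact lt_of_le_of_lt hx (hrefl t ht).2
    rw [hset, hν, withDensity_apply _ hKm, Measure.restrict_restrict hKm,
      inter_eq_self_of_subset_left hKΩ]
    exact lintegral_hessDet_sublevel hΩo hΩc hΩb h0 hfc hfm hfd hfd' hu husm2 hconv (hrefl t ht)
      (hpos _ (hrefl t ht))
  have h2 : ∫⁻ x, ENNReal.ofReal (∫ t in (0 : ℝ)..(1 - gauge Ω x), g t) ∂ν =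
      (∫⁻ t in Ioo (0 : ℝ) 1, ENNReal.ofReal (deriv f (1 - t) ^ (n + 1))) *
        volume (polarBody Ω) := by
    rw [lintegral_comp_eq_lintegral_meas_le_mul ν ?_ (by fun_prop)
      (fun t _ => hgI.intervalIntegrable) (Eventually.of_forall hg0)]
    · have hmeas : Measurable fun t : ℝ => ENNReal.ofReal (deriv f (1 - t) ^ (n + 1)) :=
        (((measurable_deriv f).comp (measurable_const.sub measurable_id)).pow_const _).ennreal_ofReal
      rw [← lintegral_mul_const _ hmeas]
      have hind : ∀ t, ν {x | t ≤ 1 - gauge Ω x} * ENNReal.ofReal (g t) =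
          (Ioo (0 : ℝ) 1).indicator (fun t => ENNReal.ofReal (deriv f (1 - t) ^ (n + 1)) *
            volume (polarBody Ω)) t := by
        intro t
        by_cases ht : t ∈ Ioo (0 : ℝ) 1
        · rw [hνK t ht, hg, indicator_of_mem ht, indicator_of_mem ht, pow_succ,
            ENNReal.ofReal_mul (pow_nonneg (hpos _ (hrefl t ht)).le n)]
          ring
        · rw [hg, indicator_of_notMem ht, indicator_of_notMem ht]
          simp
      simp_rw [hind]
      rw [setLIntegral_indicator measurableSet_Ioo,
        inter_eq_self_of_subset_left Ioo_subset_Ioi_self]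
    · refine (withDensity_absolutelyContinuous _ _).ae_le ?_
      filter_upwards [ae_restrict_mem hΩm] with x hx
      simpa using (hgauge x hx).2.le
  have h3 : ∫ s in (0 : ℝ)..1, deriv f s ^ (n + 1) =
      (∫⁻ t in Ioo (0 : ℝ) 1, ENNReal.ofReal (deriv f (1 - t) ^ (n + 1))).toReal := by
    have h := intervalIntegral.integral_comp_sub_left (a := (0 : ℝ)) (b := 1)
      (fun s => deriv f s ^ (n + 1)) 1
    rw [sub_self, sub_zero] at h
    rw [← h, intervalIntegral.integral_of_le zero_le_one, integral_Ioc_eq_integral_Ioo,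
      integral_eq_lintegral_of_nonneg_ae]
    · filter_upwards [ae_restrict_mem measurableSet_Ioo] with t ht
      exact pow_nonneg (hpos _ (hrefl t ht)).le _
    · exact (((measurable_deriv f).comp
        (measurable_const.sub measurable_id)).pow_const _).aestronglyMeasurable
  rw [integral_eq_lintegral_of_nonneg_ae, h1, h2, h3, ENNReal.toReal_mul, mul_comm]
  · filter_upwards [ae_restrict_mem hΩm] with x hx
    exact mul_nonneg (hu0 x hx) (hessDet_nonneg hΩo hconv husm2 hx)
  · exact (hum.neg.mul (measurable_hessDet u).aemeasurable).aestronglyMeasurable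
end

section
/- Let Ω ⊆ ℝⁿ bounded convex open with 0 ∈ Ω, and u(x) = f(μ_Ω(x)) a smooth convex function vanishing on ∂Ω. Let û be the Schwarz symmetrization of u (a radial function on the ball B of the same volume, equidistributed with u). Then the normalized Monge-Ampère energies agree: E_Ω(u)/M(Ω) = E_B(û)/M(B), where M(Ω) = |Ω|·|Ω°| is the Mahler volume. -/
/-!
The energy of `u = f ∘ gauge Ω` equals `|Ω°|` times a number that depends on `f` only. Since `û` has
the same profile `f` on a ball of the same volume as `Ω`, dividing by `M(Ω) = |Ω| |Ω°|` and by `M(B)`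
gives the same value.

The proportionality comes from the distribution of `gauge Ω` under the Monge–Ampère measure
`det D²u dx` (`gaugeDist`). The Monge–Ampère mass of a set `A` is the volume of `∇u(A)`
(`lintegral_hessDet`): the gradient of a convex function is injective where `det D²u ≠ 0`, and the
image of `{det D²u = 0}` is null by Sard's theorem. No strict convexity of `Ω` or of `f` is needed.
For `A = {0 < gauge Ω ≤ τ}` the gradient image is `f'(τ) • Ω°` up to a null set
(`IsGaugeComp.volume_gradient_image`): the gradient at `x` is bounded by `f'(gauge Ω x)` in the
support function of `Ω` (`inner_gradient_le`), and conversely every nonzero `y` whose support value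
is below `f'(τ)` is attained on the ray through a boundary point supporting `y`
(`exists_gradient_eq`). Hence `gaugeDist Ω u` gives `(-∞, τ]` the mass `f'(τ)ⁿ |Ω°|`, so the
distributions for two bodies are proportional with ratio the ratio of the polar volumes, and the
energy is the integral of `-f` against this distribution (`maEnergy_eq`, `maEnergy_mul_comm`).

The surjectivity statement requires `f' 0 = 0`; this follows from the smoothness of `u` at the
origin, where the gauge has a conical point (`deriv_zero_of_differentiableAt`). The function `û` is
needed to be smooth only away from the origin, a null set in positive dimension. In dimension zero
`Ω` and the ball coincide.
-/

open MeasureTheory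
open scoped RealInnerProductSpace

/-- The Monge–Ampère energy `E_Ω(u) = ∫_Ω (-u) det D²u`. -/
noncomputable def maEnergy {n : ℕ} (Ω : Set (EuclideanSpace ℝ (Fin n)))
    (u : EuclideanSpace ℝ (Fin n) → ℝ) : ℝ :=
  ∫ x in Ω, (-(u x)) * hessDet u x

/-- The Mahler volume `M(Ω) = |Ω|·|Ω°|`. -/
noncomputable def mahlerVolume {n : ℕ} (Ω : Set (EuclideanSpace ℝ (Fin n))) : ℝ :=
  (volume Ω).toReal * (volume (polarBody Ω)).toReal

section MongeAmpere

open Set Filter Topology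
open scoped Pointwise

/-! ### Convex functions and one-sided derivatives -/

lemma deriv_nonneg_of_nonneg_right {d : ℝ → ℝ} {d' δ : ℝ} (hd : HasDerivWithinAt d d' (Ioi 0) 0)
    (h0 : d 0 = 0) (hδ : 0 < δ) (hpos : ∀ t ∈ Ioo 0 δ, 0 ≤ d t) : 0 ≤ d' := by
  rw [hasDerivWithinAt_iff_tendsto_slope' (by simp)] at hd
  refine ge_of_tendsto hd ?_
  filter_upwards [Ioo_mem_nhdsGT hδ] with t ht
  rw [slope_def_field, h0]
  have := hpos t ht
  have := ht.1
  simp only [sub_zero]; positivity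

/-- A convex function lies above its tangent hyperplanes. -/
lemma ConvexOn.tangent_le {E : Type*} [NormedAddCommGroup E] [NormedSpace ℝ E] {S : Set E}
    {u : E → ℝ} (hc : ConvexOn ℝ S u) {x z : E} {L : E →L[ℝ] ℝ} (hx : x ∈ S) (hz : z ∈ S)
    (hL : HasFDerivAt u L x) : u x + L (z - x) ≤ u z := by
  have hline : HasDerivAt (fun t : ℝ => x + t • (z - x)) (z - x) 0 := by
    simpa using ((hasDerivAt_id (0 : ℝ)).smul_const (z - x)).const_add x
  have h1 : HasDerivAt (fun t : ℝ => u (x + t • (z - x))) (L (z - x)) 0 :=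
    HasFDerivAt.comp_hasDerivAt (0 : ℝ) (by simpa using hL) hline
  have h2 : HasDerivAt (fun t : ℝ => u x + t * (u z - u x)) (u z - u x) 0 := by
    simpa using ((hasDerivAt_id (0 : ℝ)).mul_const (u z - u x)).const_add (u x)
  have := deriv_nonneg_of_nonneg_right (h2.sub h1).hasDerivWithinAt (by simp) one_pos
    (fun t ht => by
      have := hc.2 hx hz (sub_nonneg.2 ht.2.le) ht.1.le (by ring)
      have e : (1 - t) • x + t • z = x + t • (z - x) := by module
      rw [e] at this
      simp only [smul_eq_mul] at this
      simp only [Pi.sub_apply]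
      linarith)
  linarith

/-! ### Hessians of convex functions and gradient images -/

section Hessian

variable {n : ℕ}

/-- The Riesz isomorphism from the dual, as a (genuinely) linear map: over `ℝ` the conjugation in
`InnerProductSpace.toDual` is trivial. -/
noncomputable def riesz (n : ℕ) :
    StrongDual ℝ (EuclideanSpace ℝ (Fin n)) →L[ℝ] EuclideanSpace ℝ (Fin n) :=
  LinearMap.toContinuousLinearMap
    { toFun := (InnerProductSpace.toDual ℝ (EuclideanSpace ℝ (Fin n))).symm
      map_add' := fun x y => by simp
      map_smul' := fun c x => by simp }

lemma riesz_apply (L : StrongDual ℝ (EuclideanSpace ℝ (Fin n))) :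
    riesz n L = (InnerProductSpace.toDual ℝ (EuclideanSpace ℝ (Fin n))).symm L := rfl

/-- The Hessian of `u` at `x`, as an endomorphism: the derivative of the gradient of `u`. -/
noncomputable def hessEnd (u : EuclideanSpace ℝ (Fin n) → ℝ) (x : EuclideanSpace ℝ (Fin n)) :
    EuclideanSpace ℝ (Fin n) →L[ℝ] EuclideanSpace ℝ (Fin n) :=
  riesz n ∘L fderiv ℝ (fderiv ℝ u) x

lemma inner_hessEnd (u : EuclideanSpace ℝ (Fin n) → ℝ) (x v w : EuclideanSpace ℝ (Fin n)) :
    ⟪hessEnd u x v, w⟫ = fderiv ℝ (fderiv ℝ u) x v w := by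
  simp [hessEnd, riesz_apply]

lemma inner_gradient' (u : EuclideanSpace ℝ (Fin n) → ℝ) (x w : EuclideanSpace ℝ (Fin n)) :
    ⟪gradient u x, w⟫ = fderiv ℝ u x w := by
  simp [gradient]

lemma hessDet_eq_det (u : EuclideanSpace ℝ (Fin n) → ℝ) (x : EuclideanSpace ℝ (Fin n)) :
    hessDet u x = (hessEnd u x).det := by
  rw [ContinuousLinearMap.det,
    ← LinearMap.det_toMatrix (EuclideanSpace.basisFun (Fin n) ℝ).toBasis, hessDet,
    ← Matrix.det_transpose]
  congr 1
  ext i j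
  rw [LinearMap.toMatrix_apply, Matrix.transpose_apply, Matrix.of_apply, iteratedFDeriv_two_apply,
    OrthonormalBasis.coe_toBasis_repr_apply, OrthonormalBasis.repr_apply_apply]
  rw [real_inner_comm]
  simpa using (inner_hessEnd u x (EuclideanSpace.single j 1) (EuclideanSpace.single i 1)).symm

variable {S W : Set (EuclideanSpace ℝ (Fin n))} {u : EuclideanSpace ℝ (Fin n) → ℝ}

lemma hasFDerivAt_of_C2 (hW : IsOpen W) (hu : ContDiffOn ℝ 2 u W) {x : EuclideanSpace ℝ (Fin n)}
    (hx : x ∈ W) : HasFDerivAt u (fderiv ℝ u x) x :=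
  ((hu.contDiffAt (hW.mem_nhds hx)).differentiableAt (by norm_num)).hasFDerivAt

lemma contDiffOn_fderiv_of_C2 (hW : IsOpen W) (hu : ContDiffOn ℝ 2 u W) :
    ContDiffOn ℝ 1 (fderiv ℝ u) W :=
  hu.fderiv_of_isOpen hW (by norm_num)

lemma hasFDerivAt_fderiv_of_C2 (hW : IsOpen W) (hu : ContDiffOn ℝ 2 u W)
    {x : EuclideanSpace ℝ (Fin n)} (hx : x ∈ W) :
    HasFDerivAt (fderiv ℝ u) (fderiv ℝ (fderiv ℝ u) x) x :=
  (((contDiffOn_fderiv_of_C2 hW hu).contDiffAt (hW.mem_nhds hx)).differentiableAt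
    (by norm_num)).hasFDerivAt

lemma hasFDerivAt_gradient_s12 (hW : IsOpen W) (hu : ContDiffOn ℝ 2 u W)
    {x : EuclideanSpace ℝ (Fin n)} (hx : x ∈ W) :
    HasFDerivAt (gradient u) (hessEnd u x) x :=
  (riesz n).hasFDerivAt.comp x (hasFDerivAt_fderiv_of_C2 hW hu hx)

lemma continuousOn_hessDet (hW : IsOpen W) (hu : ContDiffOn ℝ 2 u W) :
    ContinuousOn (hessDet u) W := by
  have h2 : ContinuousOn (fderiv ℝ (fderiv ℝ u)) W :=
    (contDiffOn_fderiv_of_C2 hW hu).continuousOn_fderiv_of_isOpen hW (by norm_num)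
  have h3 : ContinuousOn (hessEnd u) W := continuousOn_const.clm_comp h2
  exact (ContinuousLinearMap.continuous_det.comp_continuousOn h3).congr
    fun x _ => hessDet_eq_det u x

lemma hasDerivAt_line (x v : EuclideanSpace ℝ (Fin n)) :
    HasDerivAt (fun t : ℝ => x + t • v) v 0 := by
  simpa using ((hasDerivAt_id (0 : ℝ)).smul_const v).const_add x

lemma exists_line_mem (hW : IsOpen W) {x : EuclideanSpace ℝ (Fin n)} (hx : x ∈ W)
    (v : EuclideanSpace ℝ (Fin n)) : ∃ δ > 0, δ ≤ 1 ∧ ∀ t ∈ Ioo (0 : ℝ) δ, x + t • v ∈ W := by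
  have hc : Tendsto (fun t : ℝ => x + t • v) (𝓝 0) (𝓝 x) := by
    simpa using (hasDerivAt_line x v).continuousAt.tendsto
  obtain ⟨δ, hδ, h⟩ := Metric.eventually_nhds_iff.1 (hc (hW.mem_nhds hx))
  refine ⟨min δ 1, by positivity, min_le_right _ _, fun t ht => h ?_⟩
  rw [Real.dist_eq, sub_zero, abs_of_pos ht.1]
  exact ht.2.trans_le (min_le_left _ _)

lemma hess_nonneg (hS : ConvexOn ℝ S u) (hW : IsOpen W) (hWS : W ⊆ S) (hu : ContDiffOn ℝ 2 u W)
    {x : EuclideanSpace ℝ (Fin n)} (hx : x ∈ W) (v : EuclideanSpace ℝ (Fin n)) :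
    0 ≤ fderiv ℝ (fderiv ℝ u) x v v := by
  obtain ⟨δ, hδ, -, hmem⟩ := exists_line_mem hW hx v
  have h1 : HasDerivAt (fun t : ℝ => fderiv ℝ u (x + t • v)) (fderiv ℝ (fderiv ℝ u) x v) 0 :=
    HasFDerivAt.comp_hasDerivAt (0 : ℝ)
      (by simpa using hasFDerivAt_fderiv_of_C2 hW hu hx) (hasDerivAt_line x v)
  have h2 : HasDerivAt (fun t : ℝ => fderiv ℝ u (x + t • v) v - fderiv ℝ u x v)
      (fderiv ℝ (fderiv ℝ u) x v v) 0 := by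
    simpa using (h1.clm_apply (hasDerivAt_const (0 : ℝ) v)).sub_const (fderiv ℝ u x v)
  refine deriv_nonneg_of_nonneg_right h2.hasDerivWithinAt (by simp) hδ fun t ht => ?_
  have hy := hmem t ht
  -- Monotonicity of the gradient: add the tangent inequalities at the two points.
  have e1 := hS.tangent_le (hWS hx) (hWS hy) (hasFDerivAt_of_C2 hW hu hx)
  have e2 := hS.tangent_le (hWS hy) (hWS hx) (hasFDerivAt_of_C2 hW hu hy)
  have e3 : x - (x + t • v) = -(t • v) := by abel
  rw [add_sub_cancel_left] at e1
  rw [e3] at e2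
  simp only [map_neg, map_smul, smul_eq_mul] at e1 e2
  have : 0 ≤ t * (fderiv ℝ u (x + t • v) v - fderiv ℝ u x v) := by linarith
  exact nonneg_of_mul_nonneg_right this ht.1

lemma hessDet_nonneg_s12 (hS : ConvexOn ℝ S u) (hW : IsOpen W) (hWS : W ⊆ S)
    (hu : ContDiffOn ℝ 2 u W) {x : EuclideanSpace ℝ (Fin n)} (hx : x ∈ W) : 0 ≤ hessDet u x := by
  have hsymm : IsSymmSndFDerivAt ℝ u x :=
    (hu.contDiffAt (hW.mem_nhds hx)).isSymmSndFDerivAt (by simp)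
  refine Matrix.PosSemidef.det_nonneg (Matrix.PosSemidef.of_dotProduct_mulVec_nonneg ?_ ?_)
  · ext i j
    simpa [iteratedFDeriv_two_apply] using hsymm _ _
  · intro y
    have hy : (WithLp.toLp 2 y : EuclideanSpace ℝ (Fin n)) =
        ∑ i, y i • EuclideanSpace.single i (1 : ℝ) := by
      ext j
      simp [Pi.single_apply]
    have := hess_nonneg hS hW hWS hu hx (WithLp.toLp 2 y)
    rw [hy] at this
    simp only [map_sum, map_smul, sum_apply, smul_apply, smul_eq_mul, Finset.mul_sum] at this
    rw [Finset.sum_comm] at this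
    simpa [iteratedFDeriv_two_apply, dotProduct, Matrix.mulVec, Finset.mul_sum, mul_comm,
      mul_left_comm] using this

/-- The gradient of a convex function is injective at points of nonzero Hessian determinant: two
points with the same gradient `L` both minimize `u - L`, so the gradient is constant on the segment
joining them and the Hessian annihilates its direction. -/
lemma ConvexOn.eq_of_fderiv_eq_of_hessDet_ne (hS : ConvexOn ℝ S u) (hW : IsOpen W) (hWS : W ⊆ S)
    (hu : ContDiffOn ℝ 2 u W) {x y : EuclideanSpace ℝ (Fin n)} (hx : x ∈ W) (hy : y ∈ W)
    (hxy : fderiv ℝ u x = fderiv ℝ u y) (hdet : hessDet u x ≠ 0) : x = y := by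
  set L := fderiv ℝ u x with hL
  have tx : ∀ z ∈ S, u x + L (z - x) ≤ u z := fun z hz =>
    hS.tangent_le (hWS hx) hz (hasFDerivAt_of_C2 hW hu hx)
  have ty : ∀ z ∈ S, u y + L (z - y) ≤ u z := fun z hz =>
    hS.tangent_le (hWS hy) hz (hxy ▸ hasFDerivAt_of_C2 hW hu hy)
  obtain ⟨δ, hδ, hδ1, hmem⟩ := exists_line_mem hW hx (y - x)
  have hconst : ∀ t ∈ Ioo 0 δ, fderiv ℝ u (x + t • (y - x)) = L := by
    intro t ht
    have hp := hmem t ht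
    have hle := hS.2 (hWS hx) (hWS hy) (sub_nonneg.2 (ht.2.le.trans hδ1)) ht.1.le (by ring)
    have e : (1 - t) • x + t • y = x + t • (y - x) := by module
    rw [e] at hle
    have h1 := ty x (hWS hx)
    have hmin : IsMinOn (fun z => u z - L z) S (x + t • (y - x)) := by
      intro z hz
      have h2 := tx z hz
      simp only [map_sub, map_add, map_smul, smul_eq_mul, mem_ofPred_eq] at *
      nlinarith [ht.1]
    have hloc := hmin.isLocalMin (mem_of_superset (hW.mem_nhds hp) hWS)
    have := hloc.hasFDerivAt_eq_zero ((hasFDerivAt_of_C2 hW hu hp).sub L.hasFDerivAt)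
    exact sub_eq_zero.1 this
  have h1 : HasDerivAt (fun t : ℝ => fderiv ℝ u (x + t • (y - x)))
      (fderiv ℝ (fderiv ℝ u) x (y - x)) 0 :=
    HasFDerivAt.comp_hasDerivAt (0 : ℝ)
      (by simpa using hasFDerivAt_fderiv_of_C2 hW hu hx) (hasDerivAt_line x (y - x))
  have h2 : HasDerivWithinAt (fun t : ℝ => fderiv ℝ u (x + t • (y - x))) 0 (Ioi 0) 0 := by
    refine (hasDerivWithinAt_const (0 : ℝ) (Ioi 0) L).congr_of_eventuallyEq ?_ (by simp [hL])
    filter_upwards [Ioo_mem_nhdsGT hδ] with t ht using hconst t ht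
  have h3 := (uniqueDiffWithinAt_Ioi (0 : ℝ)).eq_deriv _ h1.hasDerivWithinAt h2
  have h4 : hessEnd u x (y - x) = 0 := by simp [hessEnd, h3]
  rw [hessDet_eq_det] at hdet
  have h5 := (LinearMap.equivOfDetNeZero (hessEnd u x : EuclideanSpace ℝ (Fin n) →ₗ[ℝ] _)
    hdet).injective
  have h6 : y - x = 0 := h5 (by simpa using h4)
  exact (sub_eq_zero.1 h6).symm

/-- The Monge–Ampère measure as the volume of the gradient image. The gradient is injective where
the Hessian determinant does not vanish, and the remaining points have a null image by Sard's
theorem. -/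
lemma lintegral_hessDet (hS : ConvexOn ℝ S u) (hW : IsOpen W) (hWS : W ⊆ S)
    (hu : ContDiffOn ℝ 2 u W) {A : Set (EuclideanSpace ℝ (Fin n))} (hA : MeasurableSet A)
    (hAW : A ⊆ W) :
    ∫⁻ x in A, ENNReal.ofReal (hessDet u x) = volume (gradient u '' A) := by
  set N := A ∩ (W ∩ hessDet u ⁻¹' {0}ᶜ) with hN
  have hNm : MeasurableSet N := hA.inter
    ((continuousOn_hessDet hW hu).isOpen_inter_preimage hW isOpen_compl_singleton).measurableSet
  have hZ : ∀ x ∈ A \ N, hessDet u x = 0 := by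
    intro x hx
    by_contra h
    exact hx.2 ⟨hx.1, hAW hx.1, h⟩
  have hNA : N ⊆ A := inter_subset_left
  have hsplit : A = N ∪ (A \ N) := (union_sdiff_cancel hNA).symm
  have hd : ∀ x ∈ A, HasFDerivAt (gradient u) (hessEnd u x) x := fun x hx =>
    hasFDerivAt_gradient_s12 hW hu (hAW hx)
  have hnull : volume (gradient u '' (A \ N)) = 0 :=
    addHaar_image_eq_zero_of_det_fderivWithin_eq_zero volume
      (fun x hx => (hd x hx.1).hasFDerivWithinAt)
      (fun x hx => by rw [← hessDet_eq_det]; exact hZ x hx)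
  have hinj : InjOn (gradient u) N := by
    intro x hx y hy hxy
    refine hS.eq_of_fderiv_eq_of_hessDet_ne hW hWS hu hx.2.1 hy.2.1 ?_ hx.2.2
    simpa [gradient] using hxy
  have hint : ∫⁻ x in A, ENNReal.ofReal (hessDet u x) = volume (gradient u '' N) := by
    rw [← lintegral_abs_det_fderiv_eq_addHaar_image volume hNm
      (fun x hx => (hd x (hNA hx)).hasFDerivWithinAt) hinj]
    rw [← lintegral_inter_add_sdiff _ A hNm, inter_eq_right.2 hNA,
      setLIntegral_congr_fun (g := fun _ => 0) (hA.diff hNm) (fun x hx => by simp [hZ x hx]),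
      lintegral_zero, add_zero]
    refine setLIntegral_congr_fun hNm fun x hx => ?_
    rw [← hessDet_eq_det, abs_of_nonneg (hessDet_nonneg_s12 hS hW hWS hu hx.2.1)]
  rw [hint]
  refine le_antisymm (measure_mono (image_mono hNA)) ?_
  conv_lhs => rw [hsplit, image_union]
  exact (measure_union_le _ _).trans (by rw [hnull, add_zero])

end Hessian

/-! ### Gradients of functions of the gauge -/

section GaugeComposition

/-- A profile `f` on `[0, 1]`: convex, nondecreasing, of class `C¹` with derivative `df`, and with
`df 0 = 0`, so that `f ∘ gauge Ω` has no singular Monge–Ampère mass at the origin. -/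
structure IsProfile (f df : ℝ → ℝ) : Prop where
  convexOn : ConvexOn ℝ (Icc 0 1) f
  monotoneOn : MonotoneOn f (Icc 0 1)
  hasDeriv : ∀ t ∈ Icc (0 : ℝ) 1, HasDerivWithinAt f (df t) (Icc 0 1) t
  continuousOn : ContinuousOn df (Icc 0 1)
  zero : df 0 = 0

variable {n : ℕ} {Ω : Set (EuclideanSpace ℝ (Fin n))} {f df : ℝ → ℝ}
  {u : EuclideanSpace ℝ (Fin n) → ℝ}

/-- `Ω` is a bounded open convex neighbourhood of the origin, and `u = f ∘ gauge Ω` is `C²` on `Ω`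
away from the origin. -/
structure IsGaugeComp (Ω : Set (EuclideanSpace ℝ (Fin n))) (f : ℝ → ℝ)
    (u : EuclideanSpace ℝ (Fin n) → ℝ) : Prop where
  isOpen : IsOpen Ω
  convex : Convex ℝ Ω
  bounded : Bornology.IsBounded Ω
  zero_mem : 0 ∈ Ω
  eq : ∀ x, u x = f (gauge Ω x)
  smooth : ContDiffOn ℝ 2 u (Ω \ {0})

lemma tangent_le_of_convexOn_Icc {f : ℝ → ℝ} {d t s : ℝ} (hc : ConvexOn ℝ (Icc 0 1) f)
    (ht : t ∈ Icc (0 : ℝ) 1) (hs : s ∈ Icc (0 : ℝ) 1) (hd : HasDerivWithinAt f d (Icc 0 1) t) :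
    f t + d * (s - t) ≤ f s := by
  have he : derivWithin f (Icc 0 1) t = d := hd.derivWithin (uniqueDiffOn_Icc one_pos t ht)
  rcases lt_trichotomy t s with h | h | h
  · have := hc.derivWithin_le_slope ht hs h hd.differentiableWithinAt
    rw [he, slope_def_field, le_div_iff₀ (sub_pos.2 h)] at this
    linarith
  · simp [h]
  · have := hc.slope_le_derivWithin hs ht h hd.differentiableWithinAt
    rw [he, slope_def_field, div_le_iff₀ (sub_pos.2 h)] at this
    linarith

namespace IsProfile

lemma tangent_le (hf : IsProfile f df) {t s : ℝ} (ht : t ∈ Icc (0 : ℝ) 1)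
    (hs : s ∈ Icc (0 : ℝ) 1) : f t + df t * (s - t) ≤ f s :=
  tangent_le_of_convexOn_Icc hf.convexOn ht hs (hf.hasDeriv t ht)

lemma df_mono (hf : IsProfile f df) : MonotoneOn df (Icc 0 1) := by
  intro t ht s hs hts
  rcases hts.eq_or_lt with rfl | h
  · rfl
  have h1 := hf.tangent_le ht hs
  have h2 := hf.tangent_le hs ht
  nlinarith

lemma df_nonneg (hf : IsProfile f df) {t : ℝ} (ht : t ∈ Icc (0 : ℝ) 1) : 0 ≤ df t := by
  rw [← hf.zero]
  exact hf.df_mono (by simp) ht ht.1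

end IsProfile

/-- The support function of a neighbourhood of the origin is positive off the origin. -/
lemma exists_inner_pos {y : EuclideanSpace ℝ (Fin n)} (hO : Ω ∈ 𝓝 0) (hy : y ≠ 0) :
    ∃ x ∈ Ω, 0 < ⟪x, y⟫ := by
  obtain ⟨r, hr, hball⟩ := Metric.mem_nhds_iff.1 hO
  have hy' := norm_pos_iff.2 hy
  refine ⟨(r / 2 / ‖y‖) • y, hball ?_, ?_⟩
  · rw [mem_ball_zero_iff, norm_smul, Real.norm_of_nonneg (by positivity),
      div_mul_cancel₀ _ hy'.ne']
    linarith
  · rw [real_inner_smul_left, real_inner_self_eq_norm_sq]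
    positivity

namespace IsGaugeComp

variable (H : IsGaugeComp Ω f u)
include H

lemma mem_nhds : Ω ∈ 𝓝 0 := H.isOpen.mem_nhds H.zero_mem

lemma absorbent : Absorbent ℝ Ω := absorbent_nhds_zero H.mem_nhds

lemma gauge_lt_one {x : EuclideanSpace ℝ (Fin n)} (hx : x ∈ Ω) : gauge Ω x < 1 :=
  gauge_lt_one_of_mem_of_isOpen H.isOpen hx

lemma mem_of_gauge_lt {x : EuclideanSpace ℝ (Fin n)} (hx : gauge Ω x < 1) : x ∈ Ω := by
  rw [← setOfPred_gauge_lt_one_eq_self_of_isOpen H.convex H.zero_mem H.isOpen]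
  exact hx

lemma gauge_mem_Icc {x : EuclideanSpace ℝ (Fin n)} (hx : x ∈ Ω) : gauge Ω x ∈ Icc (0 : ℝ) 1 :=
  ⟨gauge_nonneg x, (H.gauge_lt_one hx).le⟩

lemma gauge_pos {x : EuclideanSpace ℝ (Fin n)} (hx : x ≠ 0) : 0 < gauge Ω x :=
  (_root_.gauge_pos H.absorbent (NormedSpace.isVonNBounded_of_isBounded ℝ H.bounded)).2 hx

lemma continuous_gauge : Continuous (gauge Ω) := _root_.continuous_gauge H.convex H.mem_nhds

lemma isOpen_punctured : IsOpen (Ω \ {0}) := H.isOpen.sdiff isClosed_singleton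

lemma convexOn (hf : IsProfile f df) : ConvexOn ℝ Ω u := by
  refine ⟨H.convex, fun x hx y hy a b ha hb hab => ?_⟩
  rw [H.eq, H.eq, H.eq]
  have hxI := H.gauge_mem_Icc hx
  have hyI := H.gauge_mem_Icc hy
  have hle : gauge Ω (a • x + b • y) ≤ a • gauge Ω x + b • gauge Ω y := by
    refine (gauge_add_le H.convex H.absorbent _ _).trans ?_
    rw [gauge_smul_of_nonneg ha, gauge_smul_of_nonneg hb]
  refine (hf.monotoneOn (H.gauge_mem_Icc (H.convex hx hy ha hb hab))
    ((convex_Icc (0 : ℝ) 1) hxI hyI ha hb hab) hle).trans ?_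
  exact hf.convexOn.2 hxI hyI ha hb hab

/-- The gradient of `u` at `x` lies in `f'(gauge Ω x) • Ω°`: compare `ε ↦ u (x + ε z)` with
`ε ↦ f (gauge Ω x + ε)`. -/
lemma inner_gradient_le (hf : IsProfile f df) {x z : EuclideanSpace ℝ (Fin n)} (hx : x ∈ Ω \ {0})
    (hz : z ∈ Ω) : ⟪z, gradient u x⟫ ≤ df (gauge Ω x) := by
  rw [real_inner_comm, inner_gradient']
  have ht := H.gauge_mem_Icc hx.1
  have ht1 := H.gauge_lt_one hx.1
  set t := gauge Ω x with htdef
  have h1 : HasDerivAt (fun ε : ℝ => u (x + ε • z)) (fderiv ℝ u x z) 0 :=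
    HasFDerivAt.comp_hasDerivAt (0 : ℝ)
      (by simpa using hasFDerivAt_of_C2 H.isOpen_punctured H.smooth hx) (hasDerivAt_line x z)
  have h2 : HasDerivWithinAt f (df t) (Ioi t) t :=
    (hf.hasDeriv t ht).mono_of_mem_nhdsWithin
      (mem_of_superset (Ioo_mem_nhdsGT ht1) fun s hs => ⟨ht.1.trans hs.1.le, hs.2.le⟩)
  have h3 : HasDerivWithinAt (fun ε : ℝ => f (t + ε)) (df t) (Ioi 0) 0 := by
    have h4 : HasDerivWithinAt (fun ε : ℝ => t + ε) 1 (Ioi 0) 0 :=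
      ((hasDerivAt_id (0 : ℝ)).const_add t).hasDerivWithinAt
    have h5 := HasDerivWithinAt.comp (0 : ℝ) (h₂ := f) (h₂' := df t) (s' := Ioi t)
      (by simpa using h2) h4 (fun ε (hε : 0 < ε) => by simpa using hε)
    rw [mul_one] at h5
    exact h5
  have h6 := deriv_nonneg_of_nonneg_right (h3.sub h1.hasDerivWithinAt) (by simp [H.eq, htdef])
    (sub_pos.2 ht1) (fun ε hε => by
      have hle : gauge Ω (x + ε • z) ≤ t + ε := by
        refine (gauge_add_le H.convex H.absorbent _ _).trans ?_
        rw [gauge_smul_of_nonneg hε.1.le, smul_eq_mul]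
        nlinarith [H.gauge_lt_one hz, hε.1]
      have hle1 : t + ε ≤ 1 := by linarith [hε.2]
      have := hf.monotoneOn ⟨gauge_nonneg _, hle.trans hle1⟩
        ⟨(gauge_nonneg _).trans hle, hle1⟩ hle
      simp only [Pi.sub_apply, H.eq]
      linarith)
  linarith

/-- Every nonzero `y` in `s • Ω°` with `s < f' τ` is a gradient of `u` at a point of gauge at most
`τ`. Such a point lies on the ray through a boundary point of `Ω` where the support function
`h(y)` is attained, at the gauge `t₀` with `f' t₀ = h(y)`. -/
lemma exists_gradient_eq (hf : IsProfile f df) {y : EuclideanSpace ℝ (Fin n)} {s τ : ℝ}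
    (hy : y ≠ 0) (hτ : τ ∈ Ioc (0 : ℝ) 1) (hs : s < df τ) (hys : ∀ x ∈ Ω, ⟪x, y⟫ ≤ s) :
    ∃ x ∈ Ω \ {0}, gauge Ω x ≤ τ ∧ gradient u x = y := by
  have hcpt : IsCompact (closure Ω) := H.bounded.isCompact_closure
  have hcont : Continuous fun x : EuclideanSpace ℝ (Fin n) => ⟪x, y⟫ := by fun_prop
  obtain ⟨x₀, hx₀, hmax⟩ := hcpt.exists_isMaxOn ⟨0, subset_closure H.zero_mem⟩ hcont.continuousOn
  set σ := ⟪x₀, y⟫ with hσ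
  have hσmax : ∀ x ∈ Ω, ⟪x, y⟫ ≤ σ := fun x hx => hmax (subset_closure hx)
  have hσs : σ ≤ s :=
    closure_minimal (s := Ω) hys (isClosed_le hcont continuous_const) hx₀
  obtain ⟨x₁, hx₁, hpos⟩ := exists_inner_pos H.mem_nhds hy
  have hσ0 : 0 < σ := hpos.trans_le (hσmax x₁ hx₁)
  have hg1 : gauge Ω x₀ ≤ 1 := (gauge_le_one_iff_mem_closure H.convex H.mem_nhds).2 hx₀
  -- Homogeneous form of the support inequality.
  have hsupp : ∀ z, ⟪z, y⟫ ≤ σ * gauge Ω z := by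
    intro z
    refine le_of_forall_gt_imp_ge_of_dense fun a ha => ?_
    have ha' : gauge Ω z < a / σ := by rwa [lt_div_iff₀ hσ0, mul_comm]
    obtain ⟨b, hb0, hb, w, hw, rfl⟩ := exists_lt_of_gauge_lt H.absorbent ha'
    simp only [real_inner_smul_left]
    rw [lt_div_iff₀ hσ0] at hb
    nlinarith [hσmax w hw]
  have hg : gauge Ω x₀ = 1 := by
    have := hsupp x₀
    rw [← hσ] at this
    exact le_antisymm hg1 (by nlinarith)
  obtain ⟨t, ht, hdt⟩ : σ ∈ df '' Icc 0 τ := by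
    refine intermediate_value_Icc hτ.1.le (hf.continuousOn.mono (Icc_subset_Icc_right hτ.2)) ?_
    rw [hf.zero]
    exact ⟨hσ0.le, (hσs.trans_lt hs).le⟩
  have ht0 : 0 < t := by
    refine ht.1.lt_of_ne fun h => ?_
    rw [← h, hf.zero] at hdt
    exact hσ0.ne hdt
  have htτ : t < τ := by
    refine ht.2.lt_of_ne fun h => ?_
    rw [h] at hdt
    linarith
  have htI : t ∈ Icc (0 : ℝ) 1 := ⟨ht.1, (htτ.trans_le hτ.2).le⟩
  have hgx : gauge Ω (t • x₀) = t := by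
    rw [gauge_smul_of_nonneg ht.1, hg, smul_eq_mul, mul_one]
  have hx₀0 : x₀ ≠ 0 := by
    rintro rfl
    simp at hg
  have hmem : t • x₀ ∈ Ω \ {0} :=
    ⟨H.mem_of_gauge_lt (by rw [hgx]; exact htτ.trans_le hτ.2), by simp [ht0.ne', hx₀0]⟩
  refine ⟨t • x₀, hmem, by rw [hgx]; exact htτ.le, ?_⟩
  have hmin : IsMinOn (fun z => u z - innerSL ℝ y z) Ω (t • x₀) := by
    intro z hz
    have h1 := hf.tangent_le htI (H.gauge_mem_Icc hz)
    have h2 := hsupp z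
    simp only [mem_ofPred_eq, H.eq, hgx, innerSL_apply_apply, real_inner_smul_right]
    rw [real_inner_comm] at h2
    rw [real_inner_comm, ← hσ]
    rw [hdt] at h1
    linarith
  have hloc := hmin.isLocalMin (H.isOpen.mem_nhds hmem.1)
  have h0 := hloc.hasFDerivAt_eq_zero
    ((hasFDerivAt_of_C2 H.isOpen_punctured H.smooth hmem).sub (innerSL ℝ y).hasFDerivAt)
  refine ext_inner_right ℝ fun v => ?_
  rw [inner_gradient', sub_eq_zero.1 h0, innerSL_apply_apply]

end IsGaugeComp
/-! ### Polar bodies -/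

lemma mem_smul_polarBody {s : ℝ} (hs : 0 < s) {y : EuclideanSpace ℝ (Fin n)} :
    y ∈ s • polarBody Ω ↔ ∀ x ∈ Ω, ⟪x, y⟫ ≤ s := by
  rw [mem_smul_set_iff_inv_smul_mem₀ hs.ne']
  refine forall₂_congr fun x _ => ?_
  rw [real_inner_smul_right, inv_mul_le_iff₀ hs, mul_one]

/-- The polar body of a neighbourhood of the origin is bounded. -/
lemma volume_polarBody_ne_top (hO : Ω ∈ 𝓝 0) : volume (polarBody Ω) ≠ ⊤ := by
  obtain ⟨r, hr, hball⟩ := Metric.mem_nhds_iff.1 hO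
  refine ((Metric.isBounded_closedBall (x := 0) (r := 2 / r)).subset fun y hy => ?_).measure_lt_top.ne
  rw [mem_closedBall_zero_iff, le_div_iff₀ hr]
  by_cases hy0 : y = 0
  · simp [hy0]
  have hy' := norm_pos_iff.2 hy0
  have := hy ((r / 2 / ‖y‖) • y) (hball (by
    rw [mem_ball_zero_iff, norm_smul, Real.norm_of_nonneg (by positivity),
      div_mul_cancel₀ _ hy'.ne']
    linarith))
  rw [real_inner_smul_left, real_inner_self_eq_norm_sq] at this
  have e : r / 2 / ‖y‖ * ‖y‖ ^ 2 = ‖y‖ * r / 2 := by field_simp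
  linarith

/-- The polar body of a bounded set is a neighbourhood of the origin. -/
lemma volume_polarBody_ne_zero (hb : Bornology.IsBounded Ω) : volume (polarBody Ω) ≠ 0 := by
  obtain ⟨C, hC, hΩ⟩ := hb.exists_pos_norm_le
  have hsub : Metric.ball 0 C⁻¹ ⊆ polarBody Ω := by
    intro y hy x hx
    rw [mem_ball_zero_iff] at hy
    calc ⟪x, y⟫ ≤ ‖x‖ * ‖y‖ := real_inner_le_norm x y
      _ ≤ C * C⁻¹ := by gcongr; exact hΩ x hx
      _ = 1 := mul_inv_cancel₀ hC.ne'
  exact (Measure.measure_pos_of_mem_nhds volume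
    (mem_of_superset (Metric.ball_mem_nhds 0 (inv_pos.2 hC)) hsub)).ne'

/-! ### The distribution of the gauge under the Monge–Ampère measure -/

/-- The mass that the Monge–Ampère measure of `f ∘ gauge Ω` gives to `{gauge Ω ≤ t}`, divided by
`|Ω°|`. -/
noncomputable def profileMass (n : ℕ) (df : ℝ → ℝ) (t : ℝ) : ENNReal :=
  if 0 < t then ENNReal.ofReal (df (min t 1)) ^ n else 0

/-- The distribution of the gauge of `Ω` under the Monge–Ampère measure `det D²u dx` on `Ω`
(with the origin, a null set for `n ≥ 1`, removed). -/
noncomputable def gaugeDist (Ω : Set (EuclideanSpace ℝ (Fin n)))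
    (u : EuclideanSpace ℝ (Fin n) → ℝ) : Measure ℝ :=
  ((volume.restrict (Ω \ {0})).withDensity fun x => ENNReal.ofReal (hessDet u x)).map (gauge Ω)

namespace IsGaugeComp

/-- The gradient image of the sublevel `{gauge Ω ≤ τ}` is, up to a null set, `f'(τ) • Ω°`. -/
lemma volume_gradient_image [NeZero n] (H : IsGaugeComp Ω f u) (hf : IsProfile f df) {τ : ℝ}
    (hτ : τ ∈ Ioc (0 : ℝ) 1) :
    volume (gradient u '' {x ∈ Ω \ {0} | gauge Ω x ≤ τ}) =
      ENNReal.ofReal (df τ) ^ n * volume (polarBody Ω) := by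
  have hτI : τ ∈ Icc (0 : ℝ) 1 := ⟨hτ.1.le, hτ.2⟩
  have hPtop : volume (polarBody Ω) ≠ ⊤ := volume_polarBody_ne_top H.mem_nhds
  have hvol : ∀ s : ℝ, 0 < s →
      volume (s • polarBody Ω) = ENNReal.ofReal s ^ n * volume (polarBody Ω) := by
    intro s hs
    rw [Measure.addHaar_smul, finrank_euclideanSpace_fin, abs_of_nonneg (by positivity),
      ENNReal.ofReal_pow hs.le]
  have hcont : Continuous fun s : ℝ => ENNReal.ofReal s ^ n * volume (polarBody Ω) :=
    (ENNReal.continuous_mul_const hPtop).comp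
      ((ENNReal.continuous_pow n).comp ENNReal.continuous_ofReal)
  refine le_antisymm ?_ ?_
  · refine ge_of_tendsto (hcont.continuousWithinAt (s := Ioi (df τ)) (x := df τ)).tendsto ?_
    filter_upwards [self_mem_nhdsWithin] with s hs
    have hs0 : 0 < s := (hf.df_nonneg hτI).trans_lt hs
    rw [← hvol s hs0]
    refine measure_mono ?_
    rintro _ ⟨x, ⟨hx, hxτ⟩, rfl⟩
    rw [mem_smul_polarBody hs0]
    intro z hz
    refine (H.inner_gradient_le hf hx hz).trans ((hf.df_mono ?_ hτI hxτ).trans (le_of_lt hs))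
    exact H.gauge_mem_Icc hx.1
  · rcases (hf.df_nonneg hτI).eq_or_lt with h0 | h0
    · simp [← h0, NeZero.ne n]
    refine le_of_tendsto (hcont.continuousWithinAt (s := Iio (df τ)) (x := df τ)).tendsto ?_
    filter_upwards [Ioo_mem_nhdsLT h0] with s hs
    rw [← hvol s hs.1, ← measure_sdiff_null (s := s • polarBody Ω) (t := {0}) (by simp)]
    refine measure_mono ?_
    rintro y ⟨hy, hy0⟩
    obtain ⟨x, hx, hxτ, hxy⟩ := H.exists_gradient_eq hf hy0 hτ hs.2
      ((mem_smul_polarBody hs.1).1 hy)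
    exact ⟨x, ⟨hx, hxτ⟩, hxy⟩

/-- The distribution function of `gaugeDist Ω u` is `|Ω°|` times a function of the profile only. -/
lemma gaugeDist_Iic [NeZero n] (H : IsGaugeComp Ω f u) (hf : IsProfile f df) (t : ℝ) :
    gaugeDist Ω u (Iic t) = profileMass n df t * volume (polarBody Ω) := by
  have hm : MeasurableSet (gauge Ω ⁻¹' Iic t) := H.continuous_gauge.measurable measurableSet_Iic
  rw [gaugeDist, Measure.map_apply H.continuous_gauge.measurable measurableSet_Iic,
    withDensity_apply _ hm, Measure.restrict_restrict hm]
  have hA : MeasurableSet (gauge Ω ⁻¹' Iic t ∩ (Ω \ {0})) :=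
    hm.inter H.isOpen_punctured.measurableSet
  rw [lintegral_hessDet (H.convexOn hf) H.isOpen_punctured sdiff_subset H.smooth hA
    inter_subset_right, profileMass]
  split_ifs with ht
  · rw [← H.volume_gradient_image hf ⟨lt_min ht one_pos, min_le_right t 1⟩]
    congr 2
    ext x
    simp only [mem_inter_iff, mem_preimage, mem_Iic, mem_ofPred_eq, le_min_iff]
    exact ⟨fun h => ⟨h.2, h.1, (H.gauge_lt_one h.2.1).le⟩, fun h => ⟨h.2.1, h.1⟩⟩
  · have : gauge Ω ⁻¹' Iic t ∩ (Ω \ {0}) = ∅ := by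
      refine eq_empty_of_forall_notMem fun x hx => ht ?_
      exact (H.gauge_pos hx.2.2).trans_le hx.1
    simp [this]

lemma isFiniteMeasure_gaugeDist [NeZero n] (H : IsGaugeComp Ω f u) (hf : IsProfile f df) :
    IsFiniteMeasure (gaugeDist Ω u) := by
  refine ⟨?_⟩
  have hlim := tendsto_measure_iUnion_atTop (μ := gaugeDist Ω u)
    (monotone_Iic (α := ℝ))
  rw [iUnion_Iic] at hlim
  refine (le_of_tendsto hlim (b := profileMass n df 1 * volume (polarBody Ω)) ?_).trans_lt ?_
  · filter_upwards [eventually_ge_atTop (1 : ℝ)] with t ht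
    simp only [Function.comp_apply]
    rw [H.gaugeDist_Iic hf, profileMass, profileMass, if_pos (by linarith), if_pos one_pos,
      min_eq_right ht, min_self]
  · refine ENNReal.mul_lt_top ?_ (volume_polarBody_ne_top H.mem_nhds).lt_top
    rw [profileMass, if_pos one_pos]
    exact ENNReal.pow_lt_top ENNReal.ofReal_lt_top

/-- The energy depends on `Ω` only through the distribution of its gauge. The argument of `f` is
clipped to `[0, 1]`, outside of which `f` need not be measurable. -/
lemma maEnergy_eq [NeZero n] (H : IsGaugeComp Ω f u) (hf : IsProfile f df) :
    maEnergy Ω u = ∫ t, -f (max 0 (min t 1)) ∂gaugeDist Ω u := by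
  have hfc : Continuous fun t : ℝ => -f (max 0 (min t 1)) := by
    have hc : ContinuousOn f (Icc 0 1) := fun t ht => (hf.hasDeriv t ht).continuousWithinAt
    exact (hc.comp_continuous (by fun_prop) fun t => ⟨le_max_left _ _, by simp⟩).neg
  have hm : MeasurableSet (Ω \ {0}) := H.isOpen_punctured.measurableSet
  rw [gaugeDist, integral_map H.continuous_gauge.measurable.aemeasurable
    hfc.aestronglyMeasurable, integral_withDensity_eq_integral_toReal_smul₀
    (((continuousOn_hessDet H.isOpen_punctured H.smooth).aemeasurable hm).ennreal_ofReal)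
    (ae_of_all _ fun x => ENNReal.ofReal_lt_top), maEnergy,
    ← setIntegral_congr_set (sdiff_null_ae_eq_self (s := Ω) (t := {0}) (by simp))]
  refine setIntegral_congr_fun hm fun x hx => ?_
  have hI := H.gauge_mem_Icc hx.1
  simp only [smul_eq_mul, min_eq_left hI.2, max_eq_right hI.1, H.eq]
  rw [ENNReal.toReal_ofReal (hessDet_nonneg_s12 (H.convexOn hf) H.isOpen_punctured sdiff_subset
    H.smooth hx), mul_comm]

end IsGaugeComp

/-! ### Comparison of two bodies with the same profile -/

/-- The energy of `f ∘ gauge Ω` is proportional to `|Ω°|`, with a factor depending on `f` only. -/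
lemma maEnergy_mul_comm [NeZero n] {Ω' : Set (EuclideanSpace ℝ (Fin n))}
    {u' : EuclideanSpace ℝ (Fin n) → ℝ} (hf : IsProfile f df) (H : IsGaugeComp Ω f u)
    (H' : IsGaugeComp Ω' f u') :
    (volume (polarBody Ω')).toReal * maEnergy Ω u =
      (volume (polarBody Ω)).toReal * maEnergy Ω' u' := by
  have := H.isFiniteMeasure_gaugeDist hf
  have htop : volume (polarBody Ω') ≠ ⊤ := volume_polarBody_ne_top H'.mem_nhds
  have : IsFiniteMeasure (volume (polarBody Ω') • gaugeDist Ω u) :=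
    Measure.smul_finite _ htop
  have hmeas : volume (polarBody Ω') • gaugeDist Ω u = volume (polarBody Ω) • gaugeDist Ω' u' := by
    refine Measure.ext_of_Iic _ _ fun t => ?_
    rw [Measure.smul_apply, Measure.smul_apply, H.gaugeDist_Iic hf, H'.gaugeDist_Iic hf,
      smul_eq_mul, smul_eq_mul]
    ring
  have := congrArg (fun ν : Measure ℝ => ∫ t, -f (max 0 (min t 1)) ∂ν) hmeas
  simpa only [integral_smul_measure, H.maEnergy_eq hf, H'.maEnergy_eq hf, smul_eq_mul] using this

/-- Differentiability of `f ∘ gauge Ω` at the origin, a conical point of the gauge, forces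
`f' 0 = 0`. -/
lemma deriv_zero_of_differentiableAt [NeZero n] (hO : Ω ∈ 𝓝 0) (hbd : Bornology.IsBounded Ω)
    (hcv : ConvexOn ℝ (Icc 0 1) f) (hmono : MonotoneOn f (Icc 0 1)) {d : ℝ}
    (hd : HasDerivWithinAt f d (Icc 0 1) 0) (heq : ∀ x, u x = f (gauge Ω x))
    (hu : DifferentiableAt ℝ u 0) : d = 0 := by
  have hgpos : ∀ x : EuclideanSpace ℝ (Fin n), x ≠ 0 → 0 < gauge Ω x := fun x hx =>
    (_root_.gauge_pos (absorbent_nhds_zero hO) (NormedSpace.isVonNBounded_of_isBounded ℝ hbd)).2 hx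
  have hd0 : 0 ≤ d := by
    rw [← hd.derivWithin (uniqueDiffOn_Icc one_pos 0 (by simp))]
    exact hmono.derivWithin_nonneg
  have key : ∀ v : EuclideanSpace ℝ (Fin n), v ≠ 0 → d * gauge Ω v ≤ fderiv ℝ u 0 v := by
    intro v hv
    have hg := hgpos v hv
    have h1 : HasDerivAt (fun t : ℝ => u (0 + t • v)) (fderiv ℝ u 0 v) 0 :=
      HasFDerivAt.comp_hasDerivAt (0 : ℝ) (by simpa using hu.hasFDerivAt) (hasDerivAt_line 0 v)
    have h2 : HasDerivAt (fun t : ℝ => f 0 + t * (d * gauge Ω v)) (d * gauge Ω v) 0 := by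
      simpa using ((hasDerivAt_id (0 : ℝ)).mul_const (d * gauge Ω v)).const_add (f 0)
    have := deriv_nonneg_of_nonneg_right (h1.sub h2).hasDerivWithinAt (by simp [heq])
      (inv_pos.2 hg) (fun t ht => by
        have hle : t * gauge Ω v ≤ 1 := by
          have := mul_le_mul_of_nonneg_right ht.2.le hg.le
          rwa [inv_mul_cancel₀ hg.ne'] at this
        have := tangent_le_of_convexOn_Icc hcv (t := 0) (by simp)
          (s := t * gauge Ω v) ⟨mul_nonneg ht.1.le hg.le, hle⟩ hd
        simp only [Pi.sub_apply, zero_add, heq, gauge_smul_of_nonneg ht.1.le, smul_eq_mul]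
        linarith)
    linarith
  obtain ⟨v, hv⟩ := exists_ne (0 : EuclideanSpace ℝ (Fin n))
  have k1 := key v hv
  have k2 := key (-v) (neg_ne_zero.2 hv)
  rw [map_neg] at k2
  have := hgpos v hv
  have := hgpos (-v) (neg_ne_zero.2 hv)
  nlinarith

/-- The radial function `f ∘ gauge B` on a ball is `C²` away from the centre. -/
lemma isGaugeComp_ball {R : ℝ} (hR : 0 < R) (hf : ContDiffOn ℝ 2 f (Icc 0 1)) :
    IsGaugeComp (Metric.ball (0 : EuclideanSpace ℝ (Fin n)) R) f
      (fun x => f (gauge (Metric.ball (0 : EuclideanSpace ℝ (Fin n)) R) x)) where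
  isOpen := Metric.isOpen_ball
  convex := convex_ball 0 R
  bounded := Metric.isBounded_ball
  zero_mem := Metric.mem_ball_self hR
  eq := fun _ => rfl
  smooth := by
    simp only [gauge_ball hR.le]
    refine hf.comp (fun x hx => ?_) fun x hx => ?_
    · exact ((contDiffAt_norm ℝ hx.2).div_const R).contDiffWithinAt
    · exact ⟨by positivity, (div_le_one hR).2 (mem_ball_zero_iff.1 hx.1).le⟩

end GaugeComposition

end MongeAmpere

/-- Theorem 4.3: for `u = f ∘ μ_Ω` and its Schwarz symmetrization `û = f ∘ μ_B` on the
origin-centered ball `B` of the same volume, the normalized Monge–Ampère energies agree: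
`E_Ω(u)/M(Ω) = E_B(û)/M(B)`. -/
theorem normalized_energy_invariant (n : ℕ) (Ω : Set (EuclideanSpace ℝ (Fin n)))
    (hΩo : IsOpen Ω) (hΩc : Convex ℝ Ω) (hΩb : Bornology.IsBounded Ω)
    (h0 : (0 : EuclideanSpace ℝ (Fin n)) ∈ Ω)
    (R : ℝ) (hR : 0 < R)
    (hvol : volume (Metric.ball (0 : EuclideanSpace ℝ (Fin n)) R) = volume Ω)
    (f : ℝ → ℝ) (hf : ContDiffOn ℝ (⊤ : ℕ∞) f (Set.Icc 0 1)) (hfc : ConvexOn ℝ (Set.Icc 0 1) f)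
    (hfm : StrictMonoOn f (Set.Icc 0 1)) (hf1 : f 1 = 0)
    (u : EuclideanSpace ℝ (Fin n) → ℝ) (hu : ∀ x, u x = f (gauge Ω x))
    (husm : ContDiffOn ℝ (⊤ : ℕ∞) u Ω) (hconv : ConvexOn ℝ Ω u) :
    maEnergy Ω u / mahlerVolume Ω =
      maEnergy (Metric.ball (0 : EuclideanSpace ℝ (Fin n)) R)
          (fun x => f (gauge (Metric.ball (0 : EuclideanSpace ℝ (Fin n)) R) x)) /
        mahlerVolume (Metric.ball (0 : EuclideanSpace ℝ (Fin n)) R) := by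
  rcases Nat.eq_zero_or_pos n with rfl | hn
  · -- In dimension zero `Ω` and the ball are both the whole one-point space.
    have e1 : Ω = Set.univ :=
      Set.eq_univ_of_forall fun x => by rwa [Subsingleton.elim x 0]
    have e2 : Metric.ball (0 : EuclideanSpace ℝ (Fin 0)) R = Set.univ :=
      Set.eq_univ_of_forall fun x => by
        rw [Subsingleton.elim x 0]
        exact Metric.mem_ball_self hR
    have e3 : u = fun x => f (gauge Set.univ x) := by
      funext x
      rw [hu, e1]
    rw [e2, e3, e1]
  have : NeZero n := ⟨hn.ne'⟩
  have hud : UniqueDiffOn ℝ (Set.Icc (0 : ℝ) 1) := uniqueDiffOn_Icc one_pos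
  have hder : ∀ t ∈ Set.Icc (0 : ℝ) 1,
      HasDerivWithinAt f (derivWithin f (Set.Icc 0 1) t) (Set.Icc 0 1) t := fun t ht =>
    (hf.differentiableOn (by simp) t ht).hasDerivWithinAt
  have h2le : (2 : WithTop ℕ∞) ≤ ((⊤ : ℕ∞) : WithTop ℕ∞) := 
    WithTop.coe_le_coe.2 le_top
  have hΩn := hΩo.mem_nhds h0
  have hprof : IsProfile f (derivWithin f (Set.Icc 0 1)) :=
    { convexOn := hfc
      monotoneOn := hfm.monotoneOn
      hasDeriv := hder
      continuousOn := hf.continuousOn_derivWithin hud (by simp)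
      zero := deriv_zero_of_differentiableAt hΩn hΩb hfc hfm.monotoneOn (hder 0 (by simp)) hu
        ((husm.contDiffAt hΩn).differentiableAt (by simp)) }
  have H : IsGaugeComp Ω f u :=
    ⟨hΩo, hΩc, hΩb, h0, hu, (husm.of_le h2le).mono Set.sdiff_subset⟩
  have H' := isGaugeComp_ball (n := n) hR (hf.of_le h2le)
  have key := maEnergy_mul_comm hprof H H'
  have hpos : ∀ {A : Set (EuclideanSpace ℝ (Fin n))}, A ∈ nhds 0 → Bornology.IsBounded A →
      (volume (polarBody A)).toReal ≠ 0 := fun hA hb =>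
    ENNReal.toReal_ne_zero.2 ⟨volume_polarBody_ne_zero hb, volume_polarBody_ne_top hA⟩
  have hP := hpos H.mem_nhds H.bounded
  have hP' := hpos H'.mem_nhds H'.bounded
  rw [mahlerVolume, mahlerVolume, hvol, mul_comm (volume Ω).toReal, mul_comm (volume Ω).toReal,
    ← div_div, ← div_div]
  congr 1
  rw [div_eq_div_iff hP hP']
  linarith
end

section
/- Let u : ℂ^{n+1} ⊇ D → ℝ be a smooth function such that D' = {(w,z) ∈ ℂ × ℂⁿ : u(z) - Re w < 0} is pseudoconvex. Then u is plurisubharmonic. -/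
/-!
Suppose the sub-mean value inequality for `u` fails on the disc `s ↦ z + s • w`, and put
`v s = u (z + s • w)`. Approximating `v` on the unit circle by the real part of an entire function
`f` (`exists_re_approx`), the mean value property makes `re (f 0)` smaller than `v 0`, up to a
small error. So for a suitable real `t` the translated disc `s ↦ (f s + t, s)` lies in the closure
of the epigraph `{v s < re ω}`, has its boundary circle inside the epigraph, and touches the
complement of the epigraph at an interior point. The continuity principle `lt_re_of_le_re` forbids
this: pushing the disc slightly into the epigraph gives discs on which the exhaustion function is
bounded by its maximum near the boundary circles, so that the limit disc stays in the domain.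

The exhaustion function is only upper semicontinuous and its plurisubharmonicity is given on affine
discs, whereas the disc above is curved. The maximum principle `disc_max_principle` for curved discs
is proved by penalization: maximize `σ (ω, s) + ‖s‖ ^ 2 - K * ‖ω - F s‖ ^ 2` over a tube around the
disc.
-/

/-- A function is plurisubharmonic on `Ω` if it is upper semicontinuous on `Ω` and
satisfies the sub-mean value inequality on every closed complex disk contained in `Ω`. -/
def PSHOn {E : Type*} [NormedAddCommGroup E] [NormedSpace ℂ E]
    (φ : E → ℝ) (Ω : Set E) : Prop :=
  UpperSemicontinuousOn φ Ω ∧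
    ∀ z w : E, (∀ lam : ℂ, ‖lam‖ ≤ 1 → z + lam • w ∈ Ω) →
      φ z ≤ (1 / (2 * Real.pi)) *
        ∫ θ in (0 : ℝ)..(2 * Real.pi), φ (z + Complex.exp (θ * Complex.I) • w)

open Set Filter Topology

theorem mean_re_of_differentiable {F : ℂ → ℂ} (hF : Differentiable ℂ F) (c : ℂ) :
    (1 / (2 * Real.pi)) * ∫ θ in (0 : ℝ)..(2 * Real.pi), (F (Complex.exp (θ * Complex.I) * c)).re
      = (F 0).re := by
  have hG : Differentiable ℂ (fun s : ℂ => F (s * c)) :=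
    hF.comp (differentiable_id.mul_const c)
  have h := (hG.diffContOnCl (s := Metric.ball (0 : ℂ) |1|)).circleAverage
  rw [Real.circleAverage_def] at h
  have hc : Continuous fun θ : ℝ => F (circleMap 0 1 θ * c) :=
    hG.continuous.comp (continuous_circleMap 0 1)
  have h2 := Complex.reCLM.intervalIntegral_comp_comm 
    (hc.intervalIntegrable (μ := MeasureTheory.volume) 0 (2 * Real.pi))
  simp only [circleMap, zero_add, Complex.ofReal_one, one_mul, zero_mul, Complex.reCLM_apply]
    at h h2
  rw [h2, ← h]
  simp

theorem norm_exp_I (θ : ℝ) : ‖Complex.exp (θ * Complex.I)‖ = 1 :=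
  Complex.norm_exp_ofReal_mul_I θ

/-- The real parts of entire functions are uniformly dense in the continuous real functions on the
unit circle: a trigonometric polynomial has the form `F + conj G` with `F`, `G` polynomials, and its
real part is that of `F + G`. -/
theorem exists_re_approx {v : ℂ → ℝ} (hv : ContinuousOn v (Metric.sphere 0 1)) {ε : ℝ}
    (hε : 0 < ε) :
    ∃ F : ℂ → ℂ, Differentiable ℂ F ∧ ∀ ζ : ℂ, ‖ζ‖ = 1 → |(F ζ).re - v ζ| < ε := by
  have hcont : Continuous fun x : UnitAddCircle => (v (AddCircle.toCircle x : ℂ) : ℂ) := by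
    refine Complex.continuous_ofReal.comp (hv.comp_continuous ?_ ?_)
    · exact continuous_subtype_val.comp AddCircle.continuous_toCircle
    · intro x; simp [Circle.norm_coe]
  let g : C(UnitAddCircle, ℂ) := ⟨_, hcont⟩
  have hg : g ∈ (Submodule.span ℂ (range <| @fourier (1 : ℝ))).topologicalClosure := by
    rw [span_fourier_closure_eq_top]; trivial
  obtain ⟨p, hp, hpg⟩ := Metric.mem_closure_iff.1 hg ε hε
  have key : ∃ F G : ℂ → ℂ, Differentiable ℂ F ∧ Differentiable ℂ G ∧ ∀ x : UnitAddCircle,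
      p x = F (AddCircle.toCircle x) + (starRingEnd ℂ) (G (AddCircle.toCircle x)) := by
    refine Submodule.span_induction (p := fun p _ => ∃ F G : ℂ → ℂ, Differentiable ℂ F ∧
      Differentiable ℂ G ∧ ∀ x : UnitAddCircle,
      p x = F (AddCircle.toCircle x) + (starRingEnd ℂ) (G (AddCircle.toCircle x)))
      ?_ ?_ ?_ ?_ hp
    · rintro _ ⟨n, rfl⟩
      obtain ⟨m, rfl | rfl⟩ := n.eq_nat_or_neg
      · refine ⟨fun s => s ^ m, 0, differentiable_pow m, differentiable_const 0, fun x => ?_⟩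
        rw [fourier_apply]
        simp [AddCircle.toCircle_nsmul]
      · refine ⟨0, fun s => s ^ m, differentiable_const 0, differentiable_pow m, fun x => ?_⟩
        rw [fourier_neg, fourier_apply]
        simp [AddCircle.toCircle_nsmul]
    · exact ⟨0, 0, differentiable_const 0, differentiable_const 0, fun x => by simp⟩
    · rintro p q _ _ ⟨F, G, hF, hG, h⟩ ⟨F', G', hF', hG', h'⟩
      refine ⟨F + F', G + G', hF.add hF', hG.add hG', fun x => ?_⟩
      simp [h, h']
      ring
    · rintro a p _ ⟨F, G, hF, hG, h⟩
      refine ⟨fun s => a * F s, fun s => (starRingEnd ℂ) a * G s, hF.const_mul a,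
        hG.const_mul _, fun x => ?_⟩
      simp [h, mul_add]
  obtain ⟨F, G, hF, hG, h⟩ := key
  refine ⟨fun s => F s + G s, hF.add hG, fun ζ hζ => ?_⟩
  obtain ⟨x, hx⟩ := (AddCircle.homeomorphCircle (T := 1) one_ne_zero).surjective
    ⟨ζ, by simpa [Submonoid.unitSphere] using hζ⟩
  have hx' : (AddCircle.toCircle x : ℂ) = ζ := by
    rw [← AddCircle.homeomorphCircle_apply one_ne_zero, hx]
  have h1 : ‖g x - p x‖ < ε := by
    rw [← dist_eq_norm]; exact (ContinuousMap.dist_apply_le_dist x).trans_lt hpg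
  have h2 : (p x - g x).re = (F ζ + G ζ).re - v ζ := by
    rw [h x, hx']; simp [g, hx']
  rw [← h2]
  exact (Complex.abs_re_le_norm _).trans_lt (by rwa [norm_sub_rev])

/-- The nonnegative part of a plurisubharmonic function is plurisubharmonic. This also disposes of
the circles on which `φ` is not integrable: there the integral is `0` by convention, so the
inequality for `φ` only says `φ z ≤ 0`, which is harmless for `max φ 0`. -/
theorem PSHOn.max_zero {E : Type*} [NormedAddCommGroup E] [NormedSpace ℂ E]
    {φ : E → ℝ} {Ω : Set E} (h : PSHOn φ Ω) : PSHOn (fun x => max (φ x) 0) Ω := by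
  refine ⟨h.1.sup upperSemicontinuousOn_const, fun z w hzw => ?_⟩
  have hpi : 0 < 2 * Real.pi := by positivity
  have hnn : 0 ≤ (1 / (2 * Real.pi)) *
      ∫ θ in (0 : ℝ)..(2 * Real.pi), max (φ (z + Complex.exp (θ * Complex.I) • w)) 0 :=
    mul_nonneg (by positivity)
      (intervalIntegral.integral_nonneg hpi.le fun _ _ => le_max_right _ _)
  refine max_le ((h.2 z w hzw).trans ?_) hnn
  by_cases hi : IntervalIntegrable (fun θ : ℝ => φ (z + Complex.exp (θ * Complex.I) • w))
      MeasureTheory.volume 0 (2 * Real.pi)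
  · refine mul_le_mul_of_nonneg_left ?_ (by positivity)
    refine intervalIntegral.integral_mono hpi.le hi ?_ fun _ => le_max_left _ _
    rw [intervalIntegrable_iff] at hi ⊢
    exact hi.pos_part
  · rw [intervalIntegral.integral_undef hi, mul_zero]
    exact hnn

theorem PSHOn.comp_affine {n : ℕ} {ρ : ℂ × (Fin n → ℂ) → ℝ} {Ω : Set (ℂ × (Fin n → ℂ))}
    (h : PSHOn ρ Ω) (z w : Fin n → ℂ) :
    PSHOn (fun p : ℂ × ℂ => ρ (p.1, z + p.2 • w)) {p : ℂ × ℂ | (p.1, z + p.2 • w) ∈ Ω} := by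
  have hL : Continuous fun p : ℂ × ℂ => (p.1, z + p.2 • w) := by fun_prop
  have hadd (a b : ℂ × ℂ) (s : ℂ) : ((a + s • b).1, z + (a + s • b).2 • w)
      = (a.1, z + a.2 • w) + s • (b.1, b.2 • w) := by
    ext <;> simp
    ring
  refine ⟨h.1.comp hL.continuousOn fun p hp => hp, fun a b hab => ?_⟩
  simp only [hadd, mem_ofPred_eq] at hab ⊢
  exact h.2 _ _ hab

/-- Maximum principle along the holomorphic disc `s ↦ (F s, s)`, which need not be affine: a bound
for a nonnegative plurisubharmonic `σ` on a tube of radius `r` over the boundary circle bounds `σ`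
on the disc. The additive constant `1` comes from the perturbation by `‖s‖ ^ 2`. -/
theorem disc_max_principle {σ : ℂ × ℂ → ℝ} {G : Set (ℂ × ℂ)} (hσ : PSHOn σ G)
    (hσ0 : ∀ p, 0 ≤ σ p) {F : ℂ → ℂ} (hF : Differentiable ℂ F) {r M : ℝ} (hr : 0 < r)
    (hN : ∀ p : ℂ × ℂ, ‖p.2‖ ≤ 1 → ‖p.1 - F p.2‖ ≤ r → p ∈ G)
    (hM : ∀ p : ℂ × ℂ, ‖p.2‖ = 1 → ‖p.1 - F p.2‖ ≤ r → σ p ≤ M) {a : ℂ} (ha : ‖a‖ ≤ 1) :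
    σ (F a, a) ≤ M + 1 := by
  have hFc : Continuous F := hF.continuous
  set N : Set (ℂ × ℂ) := {p | ‖p.2‖ ≤ 1 ∧ ‖p.1 - F p.2‖ ≤ r} with hNdef
  have hNG : N ⊆ G := fun p hp => hN p hp.1 hp.2
  have hNc : IsCompact N := by
    have : N = (fun q : ℂ × ℂ => (q.1 + F q.2, q.2)) ''
        (Metric.closedBall 0 r ×ˢ Metric.closedBall 0 1) := by
      ext p
      constructor
      · intro hp
        exact ⟨(p.1 - F p.2, p.2), by simpa using ⟨hp.2, hp.1⟩, by simp⟩
      · rintro ⟨q, hq, rfl⟩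
        simpa [N, and_comm] using hq
    rw [this]
    exact ((isCompact_closedBall _ _).prod (isCompact_closedBall _ _)).image (by fun_prop)
  have haN : (F a, a) ∈ N := ⟨ha, by simpa using hr.le⟩
  obtain ⟨B, hB⟩ := (hσ.1.mono hNG).bddAbove_of_isCompact hNc
  have hB' : ∀ p ∈ N, σ p ≤ B := fun p hp => hB ⟨p, hp, rfl⟩
  have hB0 : 0 ≤ B := (hσ0 _).trans (hB' _ haN)
  -- `K` is so large that `Φ` below is negative on the lateral boundary `‖p.1 - F p.2‖ = r`.
  obtain ⟨K, hK⟩ : ∃ K : ℝ, K = (B + 2) / r ^ 2 := ⟨_, rfl⟩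
  have hKr : K * r ^ 2 = B + 2 := by rw [hK]; field_simp
  have hKpos : 0 < K := by rw [hK]; positivity
  let Φ : ℂ × ℂ → ℝ := fun p => σ p + (‖p.2‖ ^ 2 - K * ‖p.1 - F p.2‖ ^ 2)
  have hΦ : UpperSemicontinuousOn Φ N :=
    (hσ.1.mono hNG).add
      (ContinuousOn.upperSemicontinuousOn (by fun_prop))
  obtain ⟨p, hpN, hmax⟩ := hΦ.exists_isMaxOn ⟨_, haN⟩ hNc
  have hmax' : ∀ q ∈ N, Φ q ≤ Φ p := fun q hq => hmax hq
  have h0 : σ (F a, a) ≤ Φ p := by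
    refine le_trans ?_ (hmax' _ haN)
    simp [Φ]
  have hp2 : ‖p.2‖ ^ 2 ≤ 1 := pow_le_one₀ (norm_nonneg _) hpN.1
  rcases hpN.1.eq_or_lt with h1 | h1
  · have := hM p h1 hpN.2
    have h3 : 0 ≤ K * ‖p.1 - F p.2‖ ^ 2 := by positivity
    simp only [Φ] at h0
    linarith
  rcases hpN.2.eq_or_lt with h2 | h2
  · exfalso
    have := hB' p hpN
    have := hσ0 (F a, a)
    simp only [Φ, h2, hKr] at h0
    linarith
  exfalso
  -- At an interior maximum of `Φ`, the average of `σ` over a small affine circle in the tangent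
  -- direction `(deriv F b, 1)` of the disc is too small, because `K * ‖ω - F s‖ ^ 2` has vanishing Levi
  -- form in that direction while `-‖s‖ ^ 2` has a negative one.
  obtain ⟨ω, b⟩ := p
  simp only at h1 h2 hp2
  set A := deriv F b with hA
  set c := ω - F b with hc
  let h : ℂ → ℂ := fun s => F (b + s) - F b - s * A
  have hh : ∀ᶠ s in 𝓝 (0 : ℂ), ‖h s‖ ≤ (1 / Real.sqrt (2 * K)) * ‖s‖ := by
    have := (hF b).hasDerivAt
    rw [hasDerivAt_iff_isLittleO_nhds_zero] at this
    exact this.def (by positivity)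
  have hNe : ∀ᶠ s in 𝓝 (0 : ℂ), ‖b + s‖ < 1 ∧ ‖(ω + s * A) - F (b + s)‖ < r := by
    refine (ContinuousAt.eventually_lt (f := fun s : ℂ => ‖b + s‖) (by fun_prop)
      continuousAt_const (by simpa using h1)).and
      (ContinuousAt.eventually_lt (f := fun s : ℂ => ‖(ω + s * A) - F (b + s)‖) (by fun_prop)
      continuousAt_const (by simpa using h2))
  obtain ⟨η', hη', hball⟩ := Metric.eventually_nhds_iff.1 (hh.and hNe)
  obtain ⟨η, hη, hηlt⟩ := exists_between hη'
  have hball' : ∀ s : ℂ, ‖s‖ ≤ η → ‖h s‖ ≤ (1 / Real.sqrt (2 * K)) * ‖s‖ ∧ ‖b + s‖ < 1 ∧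
      ‖(ω + s * A) - F (b + s)‖ < r := fun s hs =>
    hball (by rw [dist_zero_right]; exact hs.trans_lt hηlt)
  have hmemN (lam : ℂ) (hl : ‖lam‖ ≤ 1) :
      ((ω, b) : ℂ × ℂ) + lam • ((η : ℂ) * A, (η : ℂ)) ∈ N := by
    have hs : ‖lam * (η : ℂ)‖ ≤ η := by
      rw [norm_mul, Complex.norm_real, Real.norm_of_nonneg hη.le]
      exact mul_le_of_le_one_left hη.le hl
    obtain ⟨-, h4, h5⟩ := hball' _ hs
    refine ⟨by simpa using h4.le, ?_⟩
    simpa [mul_assoc] using h5.le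
  have hsub := hσ.2 (ω, b) ((η : ℂ) * A, (η : ℂ)) fun lam hl => hNG (hmemN lam hl)
  let E : ℂ → ℂ := fun s => 2 * K * (starRingEnd ℂ) c * h s + 2 * (starRingEnd ℂ) b * s
  have hE : Differentiable ℂ E := by
    have : Differentiable ℂ h := by
      have : Differentiable ℂ fun s => F (b + s) := hF.comp (differentiable_id.const_add b)
      fun_prop
    fun_prop
  -- `re E` collects the first-order terms of the expansion; its circle average is `re (E 0) = 0`.
  have hE0 : E 0 = 0 := by simp [E, h]
  have hpt (θ : ℝ) : σ ((ω, b) + Complex.exp (θ * Complex.I) • ((η : ℂ) * A, (η : ℂ))) ≤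
      σ (ω, b) - η ^ 2 / 2 - (E (Complex.exp (θ * Complex.I) * η)).re := by
    have hm := hmax' _ (hmemN _ (norm_exp_I θ).le)
    set s : ℂ := Complex.exp (θ * Complex.I) * η with hs
    have hsn : ‖s‖ = η := by
      rw [hs, norm_mul, norm_exp_I, Complex.norm_real, Real.norm_of_nonneg hη.le, one_mul]
    have e1 : ((ω, b) : ℂ × ℂ) + Complex.exp (θ * Complex.I) • ((η : ℂ) * A, (η : ℂ))
        = (ω + s * A, b + s) := by
      simp [hs, mul_assoc]
    rw [e1] at hm ⊢
    have e2 : ω + s * A - F (b + s) = c - h s := by simp only [hc, h]; ring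
    have hhs := (hball' s hsn.le).1
    rw [hsn] at hhs
    have e3 : K * ‖h s‖ ^ 2 ≤ η ^ 2 / 2 := by
      calc K * ‖h s‖ ^ 2 ≤ K * ((1 / Real.sqrt (2 * K)) * η) ^ 2 := by gcongr
        _ = η ^ 2 / 2 := by
          rw [mul_pow, div_pow, Real.sq_sqrt (by positivity)]; field_simp
    have e4 : ‖c - h s‖ ^ 2 = ‖c‖ ^ 2 - 2 * ((starRingEnd ℂ) c * h s).re + ‖h s‖ ^ 2 := by
      simp only [← Complex.normSq_eq_norm_sq, Complex.normSq_apply, Complex.sub_re,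
        Complex.sub_im, Complex.mul_re, Complex.conj_re, Complex.conj_im]
      ring
    have e5 : ‖b + s‖ ^ 2 = ‖b‖ ^ 2 + 2 * ((starRingEnd ℂ) b * s).re + η ^ 2 := by
      rw [← hsn]
      simp only [← Complex.normSq_eq_norm_sq, Complex.normSq_apply, Complex.add_re,
        Complex.add_im, Complex.mul_re, Complex.conj_re, Complex.conj_im]
      ring
    have e6 : (E s).re = 2 * K * ((starRingEnd ℂ) c * h s).re
        + 2 * ((starRingEnd ℂ) b * s).re := by
      simp only [E, Complex.add_re, Complex.mul_re, Complex.mul_im, Complex.ofReal_re,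
        Complex.ofReal_im, Complex.re_ofNat, Complex.im_ofNat]
      ring
    simp only [Φ, e2, e4, e5] at hm
    rw [← hc] at hm
    rw [e6]
    nlinarith
  have hEc : Continuous fun θ : ℝ => (E (Complex.exp (θ * Complex.I) * η)).re := by
    have := hE.continuous
    fun_prop
  have hpi : 0 < 2 * Real.pi := by positivity
  have hint : ∫ θ in (0 : ℝ)..(2 * Real.pi),
        σ ((ω, b) + Complex.exp (θ * Complex.I) • ((η : ℂ) * A, (η : ℂ))) ≤
      ∫ θ in (0 : ℝ)..(2 * Real.pi),
        (σ (ω, b) - η ^ 2 / 2 - (E (Complex.exp (θ * Complex.I) * η)).re) := by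
    have hci : IntervalIntegrable (fun θ : ℝ => σ (ω, b) - η ^ 2 / 2 -
        (E (Complex.exp (θ * Complex.I) * η)).re) MeasureTheory.volume 0 (2 * Real.pi) :=
      (continuous_const.sub hEc).intervalIntegrable _ _
    rw [intervalIntegral.integral_of_le hpi.le, intervalIntegral.integral_of_le hpi.le]
    -- Only the majorant has to be integrable, since `σ ≥ 0`.
    exact MeasureTheory.integral_mono_of_nonneg (MeasureTheory.ae_of_all _ fun _ => hσ0 _)
      hci.1 (MeasureTheory.ae_of_all _ hpt)
  have hmean := mean_re_of_differentiable hE (η : ℂ)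
  rw [hE0, Complex.zero_re] at hmean
  rw [intervalIntegral.integral_sub (intervalIntegrable_const)
    (hEc.intervalIntegrable _ _), intervalIntegral.integral_const] at hint
  have := hsub.trans (mul_le_mul_of_nonneg_left hint (by positivity))
  rw [mul_sub, hmean, sub_zero, smul_eq_mul, sub_zero, ← mul_assoc,
    one_div_mul_cancel hpi.ne', one_mul] at this
  have : 0 < η ^ 2 := by positivity
  linarith

/-- Continuity principle for the epigraph `G = {v s < re ω}` with plurisubharmonic exhaustion `σ`:
a disc `s ↦ (F s, s)` in the closure of `G` whose boundary circle lies in `G` lies entirely in `G`.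
The discs `F + τ`, `τ > 0`, lie in `G`, and by `disc_max_principle` they stay in one sublevel set
of `σ`, hence so does their limit as `τ → 0`, up to closure. -/
theorem lt_re_of_le_re {σ : ℂ × ℂ → ℝ} {G : Set (ℂ × ℂ)} (hσ : PSHOn σ G)
    (hσ0 : ∀ p, 0 ≤ σ p) {v : ℂ → ℝ} (hv : ContinuousOn v (Metric.closedBall 0 1))
    (hG : ∀ p : ℂ × ℂ, ‖p.2‖ ≤ 1 → (p ∈ G ↔ v p.2 < p.1.re))
    (hex : ∀ M : ℝ, ∀ p ∈ closure {p ∈ G | σ p < M}, p ∈ G)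
    {F : ℂ → ℂ} (hF : Differentiable ℂ F)
    (hle : ∀ a : ℂ, ‖a‖ ≤ 1 → v a ≤ (F a).re)
    (hlt : ∀ a : ℂ, ‖a‖ = 1 → v a < (F a).re) {a : ℂ} (ha : ‖a‖ ≤ 1) : v a < (F a).re := by
  have hFc : Continuous F := hF.continuous
  obtain ⟨x, hx, hxmin⟩ := (isCompact_sphere (0 : ℂ) 1).exists_isMinOn
    ⟨1, by simp⟩ (f := fun s => (F s).re - v s)
    (ContinuousOn.sub (by fun_prop) (hv.mono Metric.sphere_subset_closedBall))
  obtain ⟨r, hr⟩ : ∃ r : ℝ, r = ((F x).re - v x) / 3 := ⟨_, rfl⟩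
  have hr0 : 0 < r := by
    have := hlt x (by simpa using hx)
    rw [hr]; linarith
  have hgap (s : ℂ) (hs : ‖s‖ = 1) : v s + 3 * r ≤ (F s).re := by
    have : (F x).re - v x ≤ (F s).re - v s := hxmin (by simpa using hs)
    linarith
  -- A compact tube over the boundary circle, inside `G`, that contains the tubes of radius `τ / 2`
  -- around the boundaries of all discs `F + τ` with `0 < τ < r`.
  let B : Set (ℂ × ℂ) := (fun q : ℂ × ℂ => (q.1 + F q.2, q.2)) ''
        (Metric.closedBall 0 (2 * r) ×ˢ Metric.sphere 0 1)
  have hBc : IsCompact B :=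
    ((isCompact_closedBall _ _).prod (isCompact_sphere _ _)).image (by fun_prop)
  have hBG : B ⊆ G := by
    rintro _ ⟨q, hq, rfl⟩
    have h1 : ‖q.1‖ ≤ 2 * r := by simpa using hq.1
    have h2 : ‖q.2‖ = 1 := by simpa using hq.2
    refine (hG (q.1 + F q.2, q.2) h2.le).2 ?_
    have h3 := (abs_le.1 ((Complex.abs_re_le_norm q.1).trans h1)).1
    have := hgap _ h2
    simp only [Complex.add_re]
    linarith
  obtain ⟨M, hM⟩ := (hσ.1.mono hBG).bddAbove_of_isCompact hBc
  have hbound (τ : ℝ) (h0 : 0 < τ) (hτ : τ < r) :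
      (F a + τ, a) ∈ {p ∈ G | σ p < M + 2} := by
    refine ⟨(hG _ ha).2 (by simpa using (hle a ha).trans_lt (by linarith)), ?_⟩
    have := disc_max_principle hσ hσ0 (F := fun s => F s + τ) (hF.add_const _) (r := τ / 2)
      (M := M) (by positivity) ?_ ?_ ha
    · linarith
    · intro p hp hpr
      refine (hG p hp).2 ((hle _ hp).trans_lt ?_)
      have := (abs_le.1 ((Complex.abs_re_le_norm _).trans hpr)).1
      simp at this
      linarith
    · intro p hp hpr
      refine hM ⟨p, ⟨(p.1 - F p.2, p.2), ⟨?_, by simpa using hp⟩, by simp⟩, rfl⟩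
      have : ‖p.1 - F p.2‖ ≤ ‖p.1 - (F p.2 + τ)‖ + ‖(τ : ℂ)‖ := by
        refine le_trans (le_of_eq ?_) (norm_add_le _ _)
        congr 1; ring
      rw [Complex.norm_real, Real.norm_of_nonneg h0.le] at this
      simp only [mem_closedBall_zero_iff]
      linarith
  have hcl : (F a, a) ∈ closure {p ∈ G | σ p < M + 2} := by
    have ht : Tendsto (fun τ : ℝ => (F a + τ, a)) (𝓝[>] 0) (𝓝 (F a, a)) := by
      have : Continuous fun τ : ℝ => (F a + (τ : ℂ), a) := by fun_prop
      simpa using (this.tendsto 0).mono_left nhdsWithin_le_nhds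
    refine mem_closure_of_tendsto ht ?_
    filter_upwards [Ioo_mem_nhdsGT hr0] with τ hτ
    exact hbound τ hτ.1 hτ.2
  exact (hG _ ha).1 (hex _ _ hcl)

/-- If `u` is smooth and `D' = {(w,z) : u(z) - Re w < 0}` is pseudoconvex (in the sense of
admitting a plurisubharmonic exhaustion function), then `u` is plurisubharmonic. -/
theorem psh_of_pseudoconvex_epigraph (n : ℕ) (D : Set (Fin n → ℂ)) (hD : IsOpen D)
    (u : (Fin n → ℂ) → ℝ) (hsm : ContDiffOn ℝ (⊤ : ℕ∞) u D)
    (D' : Set (ℂ × (Fin n → ℂ)))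
    (hD' : D' = {p : ℂ × (Fin n → ℂ) | p.2 ∈ D ∧ u p.2 - p.1.re < 0})
    (hpc : ∃ ρ : ℂ × (Fin n → ℂ) → ℝ, PSHOn ρ D' ∧
      ∀ c : ℝ, IsCompact (closure {p ∈ D' | ρ p < c}) ∧ closure {p ∈ D' | ρ p < c} ⊆ D') :
    PSHOn u D := by
  have hu : ContinuousOn u D := hsm.continuousOn
  refine ⟨hu.upperSemicontinuousOn, fun z w hzw => ?_⟩
  obtain ⟨ρ, hρ, hex⟩ := hpc
  by_contra! hlt
  let v : ℂ → ℝ := fun s => u (z + s • w)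
  have hv : ContinuousOn v (Metric.closedBall 0 1) :=
    hu.comp (by fun_prop) fun s hs => hzw s (by simpa using hs)
  have hpi : 0 < 2 * Real.pi := by positivity
  obtain ⟨m, hm⟩ : ∃ m : ℝ, m = (1 / (2 * Real.pi)) *
      ∫ θ in (0 : ℝ)..(2 * Real.pi), u (z + Complex.exp (θ * Complex.I) • w) := ⟨_, rfl⟩
  rw [← hm] at hlt
  obtain ⟨ε, hε⟩ : ∃ ε : ℝ, ε = (u z - m) / 3 := ⟨_, rfl⟩
  have hε0 : 0 < ε := by rw [hε]; linarith
  obtain ⟨f, hf, hfv⟩ := exists_re_approx (hv.mono Metric.sphere_subset_closedBall) hε0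
  have hfc : Continuous f := hf.continuous
  have hf0 : (f 0).re ≤ m + ε := by
    rw [← mean_re_of_differentiable hf 1, hm]
    have hvc : Continuous fun θ : ℝ => v (Complex.exp (θ * Complex.I)) :=
      hv.comp_continuous (by fun_prop) fun θ => by simp
    have : ∫ θ in (0 : ℝ)..(2 * Real.pi), (f (Complex.exp (θ * Complex.I) * 1)).re ≤
        ∫ θ in (0 : ℝ)..(2 * Real.pi), (v (Complex.exp (θ * Complex.I)) + ε) := by
      refine intervalIntegral.integral_mono hpi.le
        (Continuous.intervalIntegrable (by fun_prop) _ _)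
        ((hvc.add continuous_const).intervalIntegrable _ _) fun θ => ?_
      have := (abs_lt.1 (hfv _ (norm_exp_I θ))).2
      simp only [mul_one]
      linarith
    rw [intervalIntegral.integral_add (hvc.intervalIntegrable _ _) intervalIntegrable_const,
      intervalIntegral.integral_const] at this
    have := mul_le_mul_of_nonneg_left this (one_div_nonneg.2 hpi.le)
    rw [mul_add, smul_eq_mul, sub_zero, ← mul_assoc _ _ ε, one_div_mul_cancel hpi.ne',
      one_mul] at this
    exact this
  -- Translate the disc `(f s, s)` until it touches the complement of the epigraph from above; since
  -- `v < re f + ε` on the circle and `ε < t`, the contact is at interior points only.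
  obtain ⟨b, hb, hbmax⟩ := (isCompact_closedBall (0 : ℂ) 1).exists_isMaxOn
    ⟨0, by simp⟩ (f := fun s => v s - (f s).re) (hv.sub (by fun_prop))
  obtain ⟨t, ht⟩ : ∃ t : ℝ, t = v b - (f b).re := ⟨_, rfl⟩
  have htmax (s : ℂ) (hs : ‖s‖ ≤ 1) : v s - (f s).re ≤ t := by
    rw [ht]; exact hbmax (by simpa using hs)
  have ht0 : ε < t := by
    have := htmax 0 (by simp)
    simp only [v, zero_smul, add_zero] at this
    linarith
  have hfin := lt_re_of_le_re (σ := fun p : ℂ × ℂ => max (ρ (p.1, z + p.2 • w)) 0)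
    (hρ.comp_affine z w).max_zero (fun _ => le_max_right _ _) hv (fun p hp => ?_)
    (fun M p hp => ?_) (F := fun s => f s + t) (hf.add_const _) (fun s hs => ?_)
    (fun s hs => ?_) (a := b) (by simpa using hb)
  · simp only [Complex.add_re, Complex.ofReal_re] at hfin
    linarith
  · rw [hD']
    simp only [mem_ofPred_eq, v, sub_neg]
    exact and_iff_right (hzw _ hp)
  · refine (hex M).2 ?_
    have hL : Continuous fun p : ℂ × ℂ => (p.1, z + p.2 • w) := by fun_prop
    refine map_mem_closure (f := fun p : ℂ × ℂ => (p.1, z + p.2 • w)) hL hp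
      fun q hq => ⟨hq.1, (le_max_left _ _).trans_lt hq.2⟩
  · have := htmax s hs
    simp only [Complex.add_re, Complex.ofReal_re]
    linarith
  · have := (abs_lt.1 (hfv s hs)).1
    simp only [Complex.add_re, Complex.ofReal_re]
    linarith
end

section
/- Let μ : ℝⁿ → [0,∞) be positively homogeneous of degree 1, smooth away from 0, and suppose u = μ² is convex on ℝⁿ and satisfies det(D²u) = C > 0 (constant) in the generalized (Alexandrov) sense on all of ℝⁿ. Then by the Jörgens–Calabi–Pogorelov theorem u is a quadratic form, and hence Ω = {μ < 1} is an ellipsoid {x : ⟨Ax, x⟩ < 1} for some positive definite symmetric matrix A. -/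
/-!
Write `H = D²u` away from the origin. Because `u` is homogeneous of degree `2`, the general
Jörgens–Calabi–Pogorelov theorem is not needed: an integral identity for Calabi's differential
inequality suffices.

* *Smooth equation* (`det_hess`). At `x ≠ 0` the only subgradient is `∇u(x)`, so the hypothesis says
  `|∇u(s)| = C |s|` for measurable `s` avoiding `0`. The area formula and convexity give
  `det H = C`, and `H` is positive definite.
* *Divergence identity* (`div_field`). Differentiating `log det H = log C` once gives
  `tr (H⁻¹ ∂ₖH) = 0`, hence `H⁻¹` is divergence free; differentiating twice shows that
  `X = H⁻¹ ∇(∂ₖ∂ₖu)` satisfies `div X = tr (H⁻¹ ∂ₖH H⁻¹ ∂ₖH) ≥ 0`, with equality only if `∂ₖH = 0`.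
* *Tangency* (`field_tangent`). By Euler's identity `∇u = H x`, so `⟨X, ∇u⟩ = ⟨∇(∂ₖ∂ₖu), x⟩ = 0`,
  since second derivatives of `u` are homogeneous of degree `0`.
* *Rigidity* (`third_eq_zero`). Integrating `div X` against a cutoff `η(u)` supported away from the
  origin gives `-∫ η'(u) ⟨X, ∇u⟩ = 0`, so `div X = 0` and `∂ₖH = 0` for every `k`.

Thus `H` is constant on the complement of the origin when `n ≥ 2`, where that set is connected; for
`n = 1` the matrix `H` equals its determinant `C`. Euler's identity `u(x) = ½⟨Hx, x⟩` concludes.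
-/
open MeasureTheory
open scoped RealInnerProductSpace

namespace Ellipsoid

open scoped ContDiff Matrix

/-- `pd i f x` is the partial derivative `∂ᵢ f (x)` in the `i`-th coordinate direction. -/
noncomputable def pd {n : ℕ} (i : Fin n) (f : EuclideanSpace ℝ (Fin n) → ℝ)
    (x : EuclideanSpace ℝ (Fin n)) : ℝ :=
  fderiv ℝ f x (EuclideanSpace.single i 1)

/-- `Sm f`: the function `f` is smooth at every point other than the origin. -/
def Sm {n : ℕ} (f : EuclideanSpace ℝ (Fin n) → ℝ) : Prop :=
  ∀ x, x ≠ 0 → ContDiffAt ℝ ∞ f x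

/-- The Hessian matrix of `u`, `Hᵢⱼ = ∂ᵢ ∂ⱼ u`. -/
noncomputable def hess {n : ℕ} (u : EuclideanSpace ℝ (Fin n) → ℝ)
    (x : EuclideanSpace ℝ (Fin n)) : Matrix (Fin n) (Fin n) ℝ :=
  Matrix.of fun i j => pd i (pd j u) x

/-! ### Partial derivatives of functions smooth off the origin -/

section Calculus

variable {n : ℕ} {f g : EuclideanSpace ℝ (Fin n) → ℝ} {x : EuclideanSpace ℝ (Fin n)}

lemma Sm.differentiableAt (hf : Sm f) (hx : x ≠ 0) : DifferentiableAt ℝ f x :=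
  (hf x hx).differentiableAt (by simp)

lemma Sm.pd (hf : Sm f) (i : Fin n) : Sm (pd i f) := by
  intro x hx
  have h : ContDiffAt ℝ ∞ (fderiv ℝ f) x := (hf x hx).fderiv_right (m := ∞) (by simp)
  exact h.clm_apply contDiffAt_const

lemma Sm.mul (hf : Sm f) (hg : Sm g) : Sm (fun y => f y * g y) :=
  fun x hx => (hf x hx).mul (hg x hx)

lemma Sm.sum {ι : Type*} {s : Finset ι} {F : ι → EuclideanSpace ℝ (Fin n) → ℝ}
    (hF : ∀ i ∈ s, Sm (F i)) : Sm (fun y => ∑ i ∈ s, F i y) :=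
  fun x hx => ContDiffAt.sum fun i hi => hF i hi x hx

lemma Sm.prod {ι : Type*} {s : Finset ι} {F : ι → EuclideanSpace ℝ (Fin n) → ℝ}
    (hF : ∀ i ∈ s, Sm (F i)) : Sm (fun y => ∏ i ∈ s, F i y) :=
  fun x hx => contDiffAt_prod fun i hi => hF i hi x hx

lemma sm_const (c : ℝ) : Sm (fun _ : EuclideanSpace ℝ (Fin n) => c) :=
  fun _ _ => contDiffAt_const

lemma Sm.det {M : EuclideanSpace ℝ (Fin n) → Matrix (Fin n) (Fin n) ℝ}
    (hM : ∀ i j, Sm (fun y => M y i j)) : Sm (fun y => (M y).det) := by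
  simp only [Matrix.det_apply']
  exact Sm.sum fun σ _ => (sm_const _).mul (Sm.prod fun i _ => hM _ _)

lemma pd_mul (hf : Sm f) (hg : Sm g) (hx : x ≠ 0) (i : Fin n) :
    pd i (fun y => f y * g y) x = pd i f x * g x + f x * pd i g x := by
  unfold Ellipsoid.pd
  rw [fderiv_fun_mul (hf.differentiableAt hx) (hg.differentiableAt hx)]
  simp
  ring

lemma pd_sum {ι : Type*} {s : Finset ι} {F : ι → EuclideanSpace ℝ (Fin n) → ℝ}
    (hF : ∀ i ∈ s, Sm (F i)) (hx : x ≠ 0) (k : Fin n) :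
    pd k (fun y => ∑ i ∈ s, F i y) x = ∑ i ∈ s, pd k (F i) x := by
  unfold Ellipsoid.pd
  rw [fderiv_fun_sum fun i hi => (hF i hi).differentiableAt hx]
  simp

lemma pd_congr (h : ∀ y, y ≠ 0 → f y = g y) (hx : x ≠ 0) (i : Fin n) :
    pd i f x = pd i g x := by
  have : f =ᶠ[nhds x] g := by
    filter_upwards [isOpen_compl_singleton.mem_nhds hx] with y hy using h y hy
  unfold Ellipsoid.pd
  rw [this.fderiv_eq]

lemma pd_const (c : ℝ) (i : Fin n) : pd i (fun _ => c) x = 0 := by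
  simp [Ellipsoid.pd]

lemma pd_comm (hf : Sm f) (hx : x ≠ 0) (i j : Fin n) :
    pd i (pd j f) x = pd j (pd i f) x := by
  have h : ContDiffAt ℝ ∞ (fderiv ℝ f) x := (hf x hx).fderiv_right (m := ∞) (by simp)
  have hd : DifferentiableAt ℝ (fderiv ℝ f) x := h.differentiableAt (by simp)
  have key : ∀ a b : Fin n, pd a (pd b f) x =
      fderiv ℝ (fderiv ℝ f) x (EuclideanSpace.single a 1) (EuclideanSpace.single b 1) := by
    intro a b
    change fderiv ℝ (fun y => fderiv ℝ f y (EuclideanSpace.single b 1)) x _ = _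
    rw [fderiv_clm_apply hd (differentiableAt_const _)]
    simp
  rw [key, key]
  have hs := (hf x hx).isSymmSndFDerivAt (by
    rw [minSmoothness_of_isRCLikeNormedField]; exact WithTop.coe_le_coe.2 (le_top : (2 : ℕ∞) ≤ ⊤))
  exact hs _ _

/-- The differential of a function is determined by its partial derivatives. -/
lemma fderiv_apply_eq (v : EuclideanSpace ℝ (Fin n)) :
    fderiv ℝ f x v = ∑ i, v i * pd i f x := by
  have hv : v = ∑ i, v i • EuclideanSpace.single i (1 : ℝ) := by
    ext j
    simp [Finset.sum_apply, Pi.single_apply]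
  conv_lhs => rw [hv]
  simp [Ellipsoid.pd]

/-- Jacobi's formula for the derivative of a determinant. -/
lemma pd_det {M : EuclideanSpace ℝ (Fin n) → Matrix (Fin n) (Fin n) ℝ}
    (hM : ∀ i j, Sm (fun y => M y i j)) (hx : x ≠ 0) (k : Fin n) :
    pd k (fun y => (M y).det) x =
      ∑ i, ∑ j, (M x).adjugate j i * pd k (fun y => M y i j) x := by
  let D : ContinuousMultilinearMap ℝ (fun _ : Fin n => Fin n → ℝ) ℝ :=
    ⟨(Matrix.detRowAlternating (n := Fin n) (R := ℝ)).toMultilinearMap,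
      (continuous_id.matrix_det : Continuous fun A : Matrix (Fin n) (Fin n) ℝ => A.det)⟩
  have h1 : ∀ i, HasFDerivAt (fun y => M y i)
      (ContinuousLinearMap.pi fun j => fderiv ℝ (fun y => M y i j) x) x := by
    intro i
    rw [hasFDerivAt_pi]
    intro j
    exact ((hM i j).differentiableAt hx).hasFDerivAt
  have h2 := HasFDerivAt.multilinear_comp D h1
  have h3 : pd k (fun y => (M y).det) x = _ :=
    congrArg (fun L => L (EuclideanSpace.single k (1 : ℝ))) h2.fderiv
  rw [h3, sum_apply]
  refine Finset.sum_congr rfl fun i _ => ?_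
  change (Matrix.updateRow (M x) i fun j => pd k (fun y => M y i j) x).det = _
  rw [← Matrix.cramer_transpose_apply, Matrix.cramer_eq_adjugate_mulVec,
    ← Matrix.adjugate_transpose]
  simp [Matrix.mulVec, dotProduct]

end Calculus

/-! ### A trace inequality -/

/-- For `K` positive definite and `S` symmetric, `tr (K S K S)` is the squared Frobenius norm
of `B S Bᴴ`, where `K = Bᴴ B`. -/
lemma trace_nonneg_and_eq_zero {n : ℕ} {K S : Matrix (Fin n) (Fin n) ℝ} (hK : K.PosDef)
    (hS : S.IsHermitian) :
    0 ≤ (K * S * K * S).trace ∧ ((K * S * K * S).trace = 0 → S = 0) := by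
  open scoped MatrixOrder in
  obtain ⟨B, hB⟩ := CStarAlgebra.nonneg_iff_eq_star_mul_self.mp hK.posSemidef.nonneg
  rw [Matrix.star_eq_conjTranspose] at hB
  have hdet : IsUnit B.det := by
    have := hK.det_pos
    rw [hB, Matrix.det_mul] at this
    exact isUnit_iff_ne_zero.mpr fun h => by simp [h] at this
  have hB1 : IsUnit B := (Matrix.isUnit_iff_isUnit_det B).mpr hdet
  have hB2 : IsUnit Bᴴ := by
    rw [Matrix.isUnit_iff_isUnit_det, Matrix.det_conjTranspose]; simpa using hdet
  have htr : (K * S * K * S).trace = ((B * S * Bᴴ)ᴴ * (B * S * Bᴴ)).trace := by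
    rw [Matrix.conjTranspose_mul, Matrix.conjTranspose_mul, Matrix.conjTranspose_conjTranspose,
      hS.eq, hB]
    have e1 : Bᴴ * B * S * (Bᴴ * B) * S = Bᴴ * (B * S * Bᴴ * B * S) := by
      simp only [Matrix.mul_assoc]
    have e2 : B * (S * Bᴴ) * (B * S * Bᴴ) = (B * S * Bᴴ * B * S) * Bᴴ := by
      simp only [Matrix.mul_assoc]
    rw [e1, e2, Matrix.trace_mul_comm]
  rw [htr]
  refine ⟨(Matrix.posSemidef_conjTranspose_mul_self _).trace_nonneg, fun h => ?_⟩
  rw [Matrix.trace_conjTranspose_mul_self_eq_zero_iff] at h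
  have h1 := hB2.mul_left_eq_zero.mp h
  exact hB1.mul_right_eq_zero.mp h1
/-! ### The twice differentiated determinant equation -/

section Rigidity

variable {n : ℕ} {u : EuclideanSpace ℝ (Fin n) → ℝ} {C : ℝ}

/-- The inverse of the Hessian, written as `C⁻¹ adj(D²u)`, which is manifestly smooth away from
the origin; it is the inverse wherever `det D²u = C`. -/
noncomputable def invHess (C : ℝ) (u : EuclideanSpace ℝ (Fin n) → ℝ)
    (x : EuclideanSpace ℝ (Fin n)) : Matrix (Fin n) (Fin n) ℝ :=
  C⁻¹ • (hess u x).adjugate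

lemma sm_hess (hu : Sm u) (i j : Fin n) : Sm (fun y => hess u y i j) :=
  (hu.pd j).pd i

lemma sm_invHess (hu : Sm u) (i j : Fin n) : Sm (fun y => invHess C u y i j) := by
  simp only [invHess, Matrix.smul_apply, Matrix.adjugate_apply, smul_eq_mul]
  refine (sm_const _).mul (Sm.det fun a b => ?_)
  simp only [Matrix.updateRow_apply]
  split_ifs
  · exact sm_const _
  · exact sm_hess hu a b

lemma hess_symm (hu : Sm u) {x : EuclideanSpace ℝ (Fin n)} (hx : x ≠ 0) (i j : Fin n) :
    hess u x i j = hess u x j i :=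
  pd_comm hu hx i j

/-- The matrix `∂ₖ D²u` of third derivatives. -/
noncomputable def third (u : EuclideanSpace ℝ (Fin n) → ℝ) (k : Fin n)
    (x : EuclideanSpace ℝ (Fin n)) : Matrix (Fin n) (Fin n) ℝ :=
  Matrix.of fun i j => pd k (fun y => hess u y i j) x

lemma sm_third (hu : Sm u) (k i j : Fin n) : Sm (fun y => third u k y i j) :=
  (sm_hess hu i j).pd k

lemma third_symm (hu : Sm u) {x : EuclideanSpace ℝ (Fin n)} (hx : x ≠ 0) (k i j : Fin n) :
    third u k x i j = third u k x j i :=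
  pd_congr (fun _ hy => hess_symm hu hy i j) hx k

lemma third_comm (hu : Sm u) {x : EuclideanSpace ℝ (Fin n)} (hx : x ≠ 0) (k i j : Fin n) :
    third u k x i j = third u i x k j :=
  pd_comm (hu.pd j) hx k i

lemma invHess_mul (hC : C ≠ 0)
    (hdet : ∀ x, x ≠ 0 → (hess u x).det = C) {x : EuclideanSpace ℝ (Fin n)} (hx : x ≠ 0) :
    invHess C u x * hess u x = 1 := by
  rw [invHess, Matrix.smul_mul, Matrix.adjugate_mul, hdet x hx, smul_smul, inv_mul_cancel₀ hC,
    one_smul]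

/-- `tr ((D²u)⁻¹ ∂ₖ D²u) = ∂ₖ log det D²u = 0`. -/
lemma trace_third (hu : Sm u) (hdet : ∀ x, x ≠ 0 → (hess u x).det = C)
    {x : EuclideanSpace ℝ (Fin n)} (hx : x ≠ 0) (k : Fin n) :
    ∑ i, ∑ j, invHess C u x j i * third u k x i j = 0 := by
  have h := pd_det (sm_hess hu) hx k
  rw [pd_congr hdet hx k, pd_const] at h
  have : ∑ i, ∑ j, invHess C u x j i * third u k x i j =
      C⁻¹ * ∑ i, ∑ j, (hess u x).adjugate j i * pd k (fun y => hess u y i j) x := by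
    simp [invHess, third, Finset.mul_sum, mul_assoc]
  rw [this, ← h, mul_zero]

lemma pd_invHess (hu : Sm u) (hC : C ≠ 0)
    (hdet : ∀ x, x ≠ 0 → (hess u x).det = C)
    {x : EuclideanSpace ℝ (Fin n)} (hx : x ≠ 0) (k i j : Fin n) :
    pd k (fun y => invHess C u y i j) x =
      -(invHess C u x * third u k x * invHess C u x) i j := by
  set D : Matrix (Fin n) (Fin n) ℝ := Matrix.of fun i j => pd k (fun y => invHess C u y i j) x
  have h : D * hess u x + invHess C u x * third u k x = 0 := by
    ext a b
    have h1 : pd k (fun y => ∑ l, invHess C u y a l * hess u y l b) x = 0 := by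
      rw [pd_congr (g := fun _ => (1 : Matrix (Fin n) (Fin n) ℝ) a b) _ hx, pd_const]
      intro y hy
      rw [← invHess_mul hC hdet hy, Matrix.mul_apply]
    rw [pd_sum (fun l _ => (sm_invHess hu a l).mul (sm_hess hu l b)) hx] at h1
    simp only [pd_mul (sm_invHess hu a _) (sm_hess hu _ b) hx, Finset.sum_add_distrib] at h1
    simpa [Matrix.mul_apply, D, third] using h1
  have h2 : hess u x * invHess C u x = 1 := mul_eq_one_comm.mp (invHess_mul hC hdet hx)
  have h3 : D = -(invHess C u x * third u k x * invHess C u x) := by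
    have := congrArg (· * invHess C u x) h
    simp only [add_mul, Matrix.mul_assoc, h2, Matrix.mul_one, Matrix.zero_mul] at this
    rw [eq_neg_of_add_eq_zero_left this, Matrix.mul_assoc]
  exact congrFun (congrFun h3 i) j

/-- The inverse Hessian `C⁻¹ adj(D²u)` is divergence free. -/
lemma div_invHess (hu : Sm u) (hC : C ≠ 0)
    (hdet : ∀ x, x ≠ 0 → (hess u x).det = C)
    {x : EuclideanSpace ℝ (Fin n)} (hx : x ≠ 0) (j : Fin n) :
    ∑ i, pd i (fun y => invHess C u y i j) x = 0 := by
  have e : ∀ i, pd i (fun y => invHess C u y i j) x =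
      -∑ b, (∑ a, invHess C u x i a * third u b x a i) * invHess C u x b j := by
    intro i
    rw [pd_invHess hu hC hdet hx, Matrix.mul_apply]
    simp only [Matrix.mul_apply]
    congr 1
    refine Finset.sum_congr rfl fun b _ => ?_
    congr 1
    refine Finset.sum_congr rfl fun a _ => ?_
    rw [third_symm hu hx i a b, third_comm hu hx i b a, third_symm hu hx b i a]
  simp only [e, Finset.sum_neg_distrib, neg_eq_zero]
  rw [Finset.sum_comm]
  refine Finset.sum_eq_zero fun b _ => ?_
  rw [← Finset.sum_mul, Finset.sum_comm, trace_third hu hdet hx b, zero_mul]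

/-- The vector field `X = (D²u)⁻¹ ∇(∂ₖ∂ₖu)`. -/
noncomputable def field (C : ℝ) (u : EuclideanSpace ℝ (Fin n) → ℝ) (k i : Fin n)
    (x : EuclideanSpace ℝ (Fin n)) : ℝ :=
  ∑ j, invHess C u x i j * pd j (fun y => hess u y k k) x

lemma sm_field (hu : Sm u) (k i : Fin n) : Sm (field C u k i) :=
  Sm.sum fun j _ => (sm_invHess hu i j).mul ((sm_hess hu k k).pd j)

/-- The divergence of `X` is `tr ((D²u)⁻¹ ∂ₖD²u (D²u)⁻¹ ∂ₖD²u)`: this is the equation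
`log det D²u = log C` differentiated twice in the direction `k`. -/
lemma div_field (hu : Sm u) (hC : C ≠ 0)
    (hdet : ∀ x, x ≠ 0 → (hess u x).det = C)
    {x : EuclideanSpace ℝ (Fin n)} (hx : x ≠ 0) (k : Fin n) :
    ∑ i, pd i (field C u k i) x =
      (invHess C u x * third u k x * invHess C u x * third u k x).trace := by
  have e1 : ∀ i, pd i (field C u k i) x =
      ∑ j, pd i (fun y => invHess C u y i j) x * pd j (fun y => hess u y k k) x +
      ∑ j, invHess C u x i j * pd k (fun y => third u k y j i) x := by
    intro i
    unfold field
    rw [pd_sum (fun j _ => (sm_invHess hu i j).mul ((sm_hess hu k k).pd j)) hx,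
      ← Finset.sum_add_distrib]
    refine Finset.sum_congr rfl fun j _ => ?_
    rw [pd_mul (sm_invHess hu i j) ((sm_hess hu k k).pd j) hx]
    congr 2
    -- all fourth derivatives commute
    have c1 : ∀ y, y ≠ 0 → pd j (fun y => hess u y k k) y = pd k (pd k (pd j u)) y := by
      intro y hy
      change pd j (pd k (pd k u)) y = _
      rw [pd_comm (hu.pd k) hy]
      exact pd_congr (fun z hz => pd_comm hu hz j k) hy k
    have c2 : ∀ y, y ≠ 0 → pd i (pd k (pd j u)) y = third u k y j i := by
      intro y hy
      rw [third_symm hu hy k j i, third_comm hu hy k i j]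
      rfl
    rw [pd_congr c1 hx i, pd_comm ((hu.pd j).pd k) hx]
    exact pd_congr c2 hx k
  have e2 : ∑ i, ∑ j, pd i (fun y => invHess C u y i j) x * pd j (fun y => hess u y k k) x
      = 0 := by
    rw [Finset.sum_comm]
    refine Finset.sum_eq_zero fun j _ => ?_
    rw [← Finset.sum_mul, div_invHess hu hC hdet hx j, zero_mul]
  have e3 : ∑ i, ∑ j, (pd k (fun y => invHess C u y j i) x * third u k x i j +
      invHess C u x j i * pd k (fun y => third u k y i j) x) = 0 := by
    have h := pd_congr (fun y hy => trace_third hu hdet hy k) hx k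
    rw [pd_const, pd_sum (fun i _ => Sm.sum fun j _ =>
      (sm_invHess hu j i).mul (sm_third hu k i j)) hx] at h
    rw [← h]
    refine Finset.sum_congr rfl fun i _ => ?_
    rw [pd_sum (fun j _ => (sm_invHess hu j i).mul (sm_third hu k i j)) hx]
    refine Finset.sum_congr rfl fun j _ => ?_
    rw [pd_mul (sm_invHess hu j i) (sm_third hu k i j) hx]
  simp only [Finset.sum_add_distrib] at e3
  simp only [e1, Finset.sum_add_distrib, e2, zero_add]
  rw [Finset.sum_comm, eq_neg_of_add_eq_zero_right e3]
  simp only [pd_invHess hu hC hdet hx, neg_mul, Finset.sum_neg_distrib, neg_neg]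
  rw [Finset.sum_comm]
  simp only [Matrix.trace, Matrix.diag_apply]
  exact Finset.sum_congr rfl fun j _ => (Matrix.mul_apply).symm

/-- By homogeneity `X` is tangent to the level sets of `u`: since `∇u = D²u x` one has
`⟨X, ∇u⟩ = ⟨∇(∂ₖ∂ₖu), x⟩`, and `∂ₖ∂ₖu` is homogeneous of degree `0`. -/
lemma field_tangent (hu : Sm u) (hC : C ≠ 0)
    (hdet : ∀ x, x ≠ 0 → (hess u x).det = C)
    {x : EuclideanSpace ℝ (Fin n)} (hx : x ≠ 0)
    (hEuler : ∀ i, pd i u x = ∑ j, hess u x i j * x j)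
    (hEuler0 : ∀ k, ∑ j, x j * pd j (fun y => hess u y k k) x = 0) (k : Fin n) :
    ∑ i, pd i u x * field C u k i x = 0 := by
  set g : Fin n → ℝ := fun j => pd j (fun y => hess u y k k) x
  have hX : (fun i => field C u k i x) = invHess C u x *ᵥ g := by
    ext i; simp [field, Matrix.mulVec, dotProduct, g]
  have hG : (fun i => pd i u x) = (x : Fin n → ℝ) ᵥ* hess u x := by
    ext i
    simp only [Matrix.vecMul, dotProduct, hEuler i]
    refine Finset.sum_congr rfl fun j _ => ?_
    rw [hess_symm hu hx i j, mul_comm]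
  have h2 : hess u x * invHess C u x = 1 := mul_eq_one_comm.mp (invHess_mul hC hdet hx)
  change (fun i => pd i u x) ⬝ᵥ (fun i => field C u k i x) = 0
  rw [hX, hG, ← Matrix.dotProduct_mulVec, Matrix.mulVec_mulVec, h2, Matrix.one_mulVec]
  exact hEuler0 k

end Rigidity

/-! ### Vanishing of the third derivatives -/

/-- If `det D²u` is constant, `D²u` is positive definite, and `u` behaves like a proper positive
function homogeneous of degree `2`, then all third derivatives of `u` vanish. The divergence
of `X` is nonnegative, and it integrates to zero against cutoffs of the form `η(u)` because `X`
is tangent to the level sets of `u`. -/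
theorem third_eq_zero {n : ℕ} {u : EuclideanSpace ℝ (Fin n) → ℝ} {C : ℝ} (hu : Sm u)
    (hC : C ≠ 0) (hdet : ∀ x, x ≠ 0 → (hess u x).det = C)
    (hcont : Continuous u) (h0 : u 0 = 0) (hpos : ∀ x, x ≠ 0 → 0 < u x)
    (hbdd : ∀ b, Bornology.IsBounded {x | u x ≤ b})
    (hPD : ∀ x, x ≠ 0 → (hess u x).PosDef)
    (hEuler : ∀ x, x ≠ 0 → ∀ i, pd i u x = ∑ j, hess u x i j * x j)
    (hEuler0 : ∀ x, x ≠ 0 → ∀ k, ∑ j, x j * pd j (fun y => hess u y k k) x = 0)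
    {x₀ : EuclideanSpace ℝ (Fin n)} (hx₀ : x₀ ≠ 0) (k : Fin n) : third u k x₀ = 0 := by
  have hKPD : ∀ x, x ≠ 0 → (invHess C u x).PosDef := by
    intro x hx
    have : invHess C u x = (hess u x)⁻¹ :=
      (Matrix.inv_eq_left_inv (invHess_mul hC hdet hx)).symm
    rw [this]
    exact (hPD x hx).inv
  have hT : ∀ x, x ≠ 0 → (third u k x).IsHermitian := by
    intro x hx
    ext i j
    simpa using third_symm hu hx k j i
  set q : EuclideanSpace ℝ (Fin n) → ℝ := fun x => ∑ i, pd i (field C u k i) x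
  have hq : ∀ x, x ≠ 0 → 0 ≤ q x ∧ (q x = 0 → third u k x = 0) := by
    intro x hx
    have := trace_nonneg_and_eq_zero (hKPD x hx) (hT x hx)
    rwa [← div_field hu hC hdet hx k] at this
  have hqS : Sm q := Sm.sum fun i _ => (sm_field hu k i).pd i
  -- a bump function around the value `u x₀ > 0`, vanishing near `0`
  let η : ContDiffBump (u x₀) := ⟨u x₀ / 4, u x₀ / 2, by linarith [hpos x₀ hx₀],
    by linarith [hpos x₀ hx₀]⟩
  set f : EuclideanSpace ℝ (Fin n) → ℝ := fun x => η (u x)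
  set S : Set (EuclideanSpace ℝ (Fin n)) := u ⁻¹' Set.Icc (u x₀ / 2) (3 * u x₀ / 2)
  have hSclosed : IsClosed S := isClosed_Icc.preimage hcont
  have hScompact : IsCompact S :=
    Metric.isCompact_of_isClosed_isBounded hSclosed
      ((hbdd (3 * u x₀ / 2)).subset fun x hx => hx.2)
  have hS0 : ∀ x ∈ S, x ≠ 0 := by
    rintro x hx rfl
    have := hx.1
    rw [h0] at this
    linarith [hpos x₀ hx₀]
  have hfS : ∀ x, x ∉ S → f x = 0 := by
    intro x hx
    refine η.zero_of_le_dist ?_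
    by_contra! h
    rw [Real.dist_eq, abs_lt] at h
    exact hx ⟨by have := h.1; change -(u x₀ / 2) < _ at this; linarith,
      by have := h.2; change _ < u x₀ / 2 at this; linarith⟩
  have hfsupp : tsupport f ⊆ S :=
    closure_minimal (fun x hx => by by_contra h; exact hx (hfS x h)) hSclosed
  have hfcs : HasCompactSupport f := hScompact.of_isClosed_subset (isClosed_tsupport f) hfsupp
  have hfSm : Sm f := fun x hx => (η.contDiff.contDiffAt).comp x (hu x hx)
  have hfD : ContDiff ℝ ∞ f := by
    rw [contDiff_iff_contDiffAt]
    intro x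
    by_cases hx : x = 0
    · have : f =ᶠ[nhds x] fun _ => 0 := by
        filter_upwards [hSclosed.isOpen_compl.mem_nhds (fun h => hS0 x h hx)] with y hy
          using hfS y hy
      exact contDiffAt_const.congr_of_eventuallyEq this
    · exact hfSm x hx
  -- a product of a cutoff supported in `S` with a function smooth off the origin is continuous
  have hcp : ∀ a b : EuclideanSpace ℝ (Fin n) → ℝ, Continuous a → tsupport a ⊆ S → Sm b →
      Continuous (fun x => a x * b x) := by
    intro a b ha has hb
    rw [continuous_iff_continuousAt]
    intro x
    by_cases hx : x ∈ S
    · exact ha.continuousAt.mul (hb x (hS0 x hx)).continuousAt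
    · have : (fun x => a x * b x) =ᶠ[nhds x] fun _ => 0 := by
        filter_upwards [hSclosed.isOpen_compl.mem_nhds hx] with y hy
        rw [image_eq_zero_of_notMem_tsupport fun h => hy (has h), zero_mul]
      exact continuousAt_const.congr this.symm
  have hcs : ∀ a b : EuclideanSpace ℝ (Fin n) → ℝ, tsupport a ⊆ S →
      HasCompactSupport (fun x => a x * b x) := fun a b has =>
    (HasCompactSupport.mul_right (f := a) (f' := b)
      (hScompact.of_isClosed_subset (isClosed_tsupport a) has))
  have hpdc : ∀ i, Continuous (pd i f) := fun i =>
    (hfD.continuous_fderiv (by simp)).clm_apply continuous_const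
  have hpds : ∀ i, tsupport (pd i f) ⊆ S := fun i =>
    (tsupport_fderiv_apply_subset ℝ _).trans hfsupp
  have hparts : ∀ i, ∫ x, f x * pd i (field C u k i) x =
      -∫ x, pd i f x * field C u k i x := by
    intro i
    refine integral_mul_fderiv_eq_neg_fderiv_mul_of_integrable ?_ ?_ ?_ ?_ ?_
    · exact (hcp _ _ (hpdc i) (hpds i) (sm_field hu k i)).integrable_of_hasCompactSupport
        (hcs _ _ (hpds i))
    · exact (hcp _ _ hfD.continuous hfsupp ((sm_field hu k i).pd i)).integrable_of_hasCompactSupport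
        (hcs _ _ hfsupp)
    · exact (hcp _ _ hfD.continuous hfsupp (sm_field hu k i)).integrable_of_hasCompactSupport
        (hcs _ _ hfsupp)
    · exact fun x _ => hfD.differentiable (by simp) x
    · exact fun x hx => (sm_field hu k i).differentiableAt (hS0 x (hfsupp hx))
  have htan : ∀ x, ∑ i, pd i f x * field C u k i x = 0 := by
    intro x
    by_cases hx : x = 0
    · refine Finset.sum_eq_zero fun i _ => ?_
      rw [image_eq_zero_of_notMem_tsupport fun h => hS0 x (hpds i h) hx, zero_mul]
    · have e : ∀ i, pd i f x = deriv η (u x) * pd i u x := by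
        intro i
        have h1 : HasDerivAt η (deriv η (u x)) (u x) :=
          ((η.contDiff (n := 1)).differentiable (by simp) _).hasDerivAt
        have h2 := h1.comp_hasFDerivAt x (hu.differentiableAt hx).hasFDerivAt
        have h3 : pd i f x = _ :=
          congrArg (fun L => L (EuclideanSpace.single i (1 : ℝ))) h2.fderiv
        rw [h3]
        simp [pd]
      simp only [e, mul_assoc]
      rw [← Finset.mul_sum, field_tangent hu hC hdet hx (hEuler x hx) (hEuler0 x hx) k, mul_zero]
  have hint : ∫ x, f x * q x = 0 := by
    have e1 : ∀ x, f x * q x = ∑ i, f x * pd i (field C u k i) x := fun x => Finset.mul_sum _ _ _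
    simp only [e1]
    rw [integral_finsetSum _ fun i _ =>
      (hcp _ _ hfD.continuous hfsupp ((sm_field hu k i).pd i)).integrable_of_hasCompactSupport
        (hcs _ _ hfsupp)]
    simp only [hparts, Finset.sum_neg_distrib]
    rw [← integral_finsetSum _ fun i _ =>
      (hcp _ _ (hpdc i) (hpds i) (sm_field hu k i)).integrable_of_hasCompactSupport
        (hcs _ _ (hpds i))]
    simp [htan]
  refine (hq x₀ hx₀).2 ?_
  by_contra hne
  have hf1 : f x₀ = 1 := η.one_of_mem_closedBall (by
    simp only [Metric.mem_closedBall, dist_self]; exact η.rIn_pos.le)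
  refine (Continuous.integral_pos_of_hasCompactSupport_nonneg_nonzero (μ := volume)
    (hcp f q hfD.continuous hfsupp hqS) (hcs f q hfsupp) (fun x => ?_) (x := x₀) ?_).ne' hint
  · by_cases hx : x = 0
    · change 0 ≤ f x * q x
      rw [hfS x fun h => hS0 x h hx, zero_mul]
    · exact mul_nonneg η.nonneg (hq x hx).1
  · rwa [hf1, one_mul]

/-! ### Homogeneous functions -/

section Homogeneous

variable {n : ℕ} {f : EuclideanSpace ℝ (Fin n) → ℝ}

/-- Positive homogeneity of degree `m` away from the origin. -/
def Hom {n : ℕ} (m : ℕ) (f : EuclideanSpace ℝ (Fin n) → ℝ) : Prop :=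
  ∀ lam : ℝ, 0 < lam → ∀ x, x ≠ 0 → f (lam • x) = lam ^ m * f x

lemma Hom.pd {m : ℕ} (hf : Sm f) (h : Hom (m + 1) f) (i : Fin n) : Hom m (pd i f) := by
  intro lam hlam x hx
  have hx' : lam • x ≠ 0 := smul_ne_zero hlam.ne' hx
  have e1 : Ellipsoid.pd i (fun y => f (lam • y)) x = lam * Ellipsoid.pd i f (lam • x) := by
    have h1 : HasFDerivAt (fun y : EuclideanSpace ℝ (Fin n) => lam • y)
        (lam • ContinuousLinearMap.id ℝ _) x := (hasFDerivAt_id x).const_smul lam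
    have h2 := (hf.differentiableAt hx').hasFDerivAt.comp x h1
    have h3 : Ellipsoid.pd i (fun y => f (lam • y)) x = _ :=
      congrArg (fun L => L (EuclideanSpace.single i (1 : ℝ))) h2.fderiv
    rw [h3]
    simp [Ellipsoid.pd]
  have e2 : Ellipsoid.pd i (fun y => f (lam • y)) x = lam ^ (m + 1) * Ellipsoid.pd i f x := by
    rw [pd_congr (g := fun y => lam ^ (m + 1) * f y) (fun y hy => h lam hlam y hy) hx,
      pd_mul (sm_const _) hf hx, pd_const, zero_mul, zero_add]
  rw [e1, pow_succ, mul_comm _ lam, mul_assoc] at e2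
  exact mul_left_cancel₀ hlam.ne' e2

/-- Euler's identity. -/
lemma Hom.euler {m : ℕ} (hf : Sm f) (h : Hom m f) {x : EuclideanSpace ℝ (Fin n)} (hx : x ≠ 0) :
    ∑ j, x j * Ellipsoid.pd j f x = m * f x := by
  rw [← fderiv_apply_eq]
  have h1 : HasDerivAt (fun t : ℝ => t • x) x 1 := by
    simpa using (hasDerivAt_id (1 : ℝ)).smul_const x
  have hd : HasFDerivAt f (fderiv ℝ f x) ((1 : ℝ) • x) := by
    rw [one_smul]; exact (hf.differentiableAt hx).hasFDerivAt
  have h2 : HasDerivAt (fun t : ℝ => f (t • x)) (fderiv ℝ f x x) 1 := hd.comp_hasDerivAt 1 h1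
  have h3 : HasDerivAt (fun t : ℝ => t ^ m * f x) (m * f x) 1 := by
    simpa using (hasDerivAt_pow m (1 : ℝ)).mul_const (f x)
  refine h2.unique (h3.congr_of_eventuallyEq ?_)
  filter_upwards [lt_mem_nhds (zero_lt_one' ℝ)] with t ht using h t ht x hx

end Homogeneous

/-! ### From the Alexandrov equation to the pointwise equation -/

section MongeAmpere

variable {n : ℕ} {u : EuclideanSpace ℝ (Fin n) → ℝ}

/-- The gradient of `u`, as a vector of partial derivatives. -/
noncomputable def grad (u : EuclideanSpace ℝ (Fin n) → ℝ) (x : EuclideanSpace ℝ (Fin n)) :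
    EuclideanSpace ℝ (Fin n) :=
  WithLp.toLp 2 fun i => pd i u x

lemma inner_grad (x v : EuclideanSpace ℝ (Fin n)) : ⟪grad u x, v⟫ = fderiv ℝ u x v := by
  rw [fderiv_apply_eq]
  simp [grad, PiLp.inner_apply]

lemma grad_ineq (hu : Sm u) (hconv : ConvexOn ℝ Set.univ u) {x : EuclideanSpace ℝ (Fin n)}
    (hx : x ≠ 0) (z : EuclideanSpace ℝ (Fin n)) : u x + ⟪grad u x, z - x⟫ ≤ u z := by
  rw [inner_grad]
  have hc := hconv.comp_affineMap (AffineMap.lineMap (k := ℝ) x z)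
  have h1 : HasDerivAt (AffineMap.lineMap (k := ℝ) x z) (z - x) (0 : ℝ) :=
    AffineMap.hasDerivAt_lineMap
  have hd : HasFDerivAt u (fderiv ℝ u x) (AffineMap.lineMap (k := ℝ) x z 0) := by
    rw [AffineMap.lineMap_apply_zero]; exact (hu.differentiableAt hx).hasFDerivAt
  have h2 := hd.comp_hasDerivAt (0 : ℝ) h1
  have := hc.le_slope_of_hasDerivAt (Set.mem_univ (0 : ℝ)) (Set.mem_univ (1 : ℝ)) one_pos h2
  simp only [slope_def_field, Function.comp_apply, AffineMap.lineMap_apply_one,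
    AffineMap.lineMap_apply_zero, sub_zero, div_one] at this
  linarith

lemma subgrad_unique (hu : Sm u) {x y : EuclideanSpace ℝ (Fin n)}
    (hx : x ≠ 0) (h : ∀ z, u x + ⟪y, z - x⟫ ≤ u z) : y = grad u x := by
  have hmin : IsLocalMin (fun z => u z - ⟪y, z⟫) x := by
    refine Filter.Eventually.of_forall fun z => ?_
    have := h z
    rw [inner_sub_right] at this
    change u x - ⟪y, x⟫ ≤ u z - ⟪y, z⟫
    linarith
  have h1 : HasFDerivAt (fun z => u z - ⟪y, z⟫) (fderiv ℝ u x - innerSL ℝ y) x :=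
    (hu.differentiableAt hx).hasFDerivAt.sub (innerSL ℝ y).hasFDerivAt
  have h2 := hmin.hasFDerivAt_eq_zero h1
  refine ext_inner_right ℝ fun v => ?_
  rw [inner_grad]
  have := congrArg (fun L => L v) h2
  simp at this
  linarith

/-- Away from the origin, the subgradient image of a set is its image under the gradient map. -/
lemma subgrad_image (hu : Sm u) (hconv : ConvexOn ℝ Set.univ u)
    {s : Set (EuclideanSpace ℝ (Fin n))} (hs : ∀ x ∈ s, x ≠ 0) :
    {y : EuclideanSpace ℝ (Fin n) | ∃ x ∈ s, ∀ z, u x + ⟪y, z - x⟫ ≤ u z} = grad u '' s := by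
  ext y
  constructor
  · rintro ⟨x, hx, h⟩
    exact ⟨x, hx, (subgrad_unique hu (hs x hx) h).symm⟩
  · rintro ⟨x, hx, rfl⟩
    exact ⟨x, hx, grad_ineq hu hconv (hs x hx)⟩

lemma contDiffAt_grad (hu : Sm u) {x : EuclideanSpace ℝ (Fin n)} (hx : x ≠ 0) :
    ContDiffAt ℝ ∞ (grad u) x := by
  rw [contDiffAt_piLp]
  exact fun i => hu.pd i x hx

lemma fderiv_grad (hu : Sm u) {x : EuclideanSpace ℝ (Fin n)} (hx : x ≠ 0)
    (v : EuclideanSpace ℝ (Fin n)) :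
    fderiv ℝ (grad u) x v = WithLp.toLp 2 (hess u x *ᵥ v) := by
  have hd : HasFDerivAt (grad u) (fderiv ℝ (grad u) x) x :=
    ((contDiffAt_grad hu hx).differentiableAt (by simp)).hasFDerivAt
  ext i
  have h1 : HasFDerivAt (fun y => grad u y i) _ x :=
    (EuclideanSpace.proj (𝕜 := ℝ) i).hasFDerivAt.comp x hd
  have h2 : fderiv ℝ (pd i u) x v = fderiv ℝ (grad u) x v i :=
    congrArg (fun L => L v) h1.fderiv
  rw [← h2, fderiv_apply_eq]
  simp only [Matrix.mulVec, dotProduct]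
  refine Finset.sum_congr rfl fun j _ => ?_
  rw [hess_symm hu hx i j, mul_comm]
  rfl

lemma det_fderiv_grad (hu : Sm u) {x : EuclideanSpace ℝ (Fin n)} (hx : x ≠ 0) :
    (fderiv ℝ (grad u) x).det = (hess u x).det := by
  have : (fderiv ℝ (grad u) x : EuclideanSpace ℝ (Fin n) →ₗ[ℝ] EuclideanSpace ℝ (Fin n)) =
      Matrix.toLin (EuclideanSpace.basisFun (Fin n) ℝ).toBasis
        (EuclideanSpace.basisFun (Fin n) ℝ).toBasis (hess u x) := by
    rw [← Matrix.toEuclideanLin_eq_toLin_orthonormal]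
    ext v i
    simp [fderiv_grad hu hx]
  rw [ContinuousLinearMap.det, this, LinearMap.det_toLin]

lemma hess_posSemidef (hu : Sm u) (hconv : ConvexOn ℝ Set.univ u)
    {x : EuclideanSpace ℝ (Fin n)} (hx : x ≠ 0) : (hess u x).PosSemidef := by
  refine Matrix.PosSemidef.of_dotProduct_mulVec_nonneg ?_ fun w => ?_
  · ext i j
    simpa using hess_symm hu hx j i
  set v : EuclideanSpace ℝ (Fin n) := WithLp.toLp 2 w
  have h1 : HasDerivAt (fun t : ℝ => x + t • v) v 0 := by
    simpa using ((hasDerivAt_id (0 : ℝ)).smul_const v).const_add x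
  have hd : HasFDerivAt (grad u) (fderiv ℝ (grad u) x) (x + (0 : ℝ) • v) := by
    rw [zero_smul, add_zero]
    exact ((contDiffAt_grad hu hx).differentiableAt (by simp)).hasFDerivAt
  have h2 : HasDerivAt (fun t : ℝ => grad u (x + t • v)) (fderiv ℝ (grad u) x v) 0 :=
    HasFDerivAt.comp_hasDerivAt (f := fun t : ℝ => x + t • v) (0 : ℝ) hd h1
  have h3 : HasDerivAt (fun t : ℝ => ⟪v, grad u (x + t • v)⟫) ⟪v, fderiv ℝ (grad u) x v⟫ 0 :=
    (innerSL ℝ v).hasFDerivAt.comp_hasDerivAt (0 : ℝ) h2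
  have h4 : ⟪v, fderiv ℝ (grad u) x v⟫ = star w ⬝ᵥ hess u x *ᵥ w := by
    rw [fderiv_grad hu hx, real_inner_comm]
    simp [PiLp.inner_apply, dotProduct, v]
  rw [← h4]
  have hne : ∀ᶠ t in nhdsWithin (0 : ℝ) {0}ᶜ, x + t • v ≠ 0 :=
    (h1.continuousAt.eventually_ne (by simpa using hx)).filter_mono nhdsWithin_le_nhds
  refine ge_of_tendsto h3.tendsto_slope ?_
  filter_upwards [hne, self_mem_nhdsWithin] with t ht ht0
  -- monotonicity of the gradient
  have a1 := grad_ineq hu hconv hx (x + t • v)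
  have a2 := grad_ineq hu hconv ht x
  simp only [add_sub_cancel_left, sub_add_cancel_left, inner_neg_right, inner_smul_right] at a1 a2
  rw [slope_def_field]
  simp only [zero_smul, add_zero, sub_zero]
  rw [real_inner_comm, real_inner_comm (grad u x)]
  have key : 0 ≤ t * (⟪grad u (x + t • v), v⟫ - ⟪grad u x, v⟫) := by linarith
  have ht2 : 0 < t ^ 2 := by have : t ≠ 0 := ht0; positivity
  have : (⟪grad u (x + t • v), v⟫ - ⟪grad u x, v⟫) / t =
      t * (⟪grad u (x + t • v), v⟫ - ⟪grad u x, v⟫) / t ^ 2 := by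
    have : t ≠ 0 := ht0
    field_simp
  rw [this]
  positivity

/-- Away from the origin the Monge–Ampère measure has density `det D²u`. The bound
`|det D²u| ≥ C` needs only the inequality in the change of variables formula; it makes the
gradient map locally injective, which yields the reverse bound. -/
lemma det_hess (hu : Sm u) (hconv : ConvexOn ℝ Set.univ u) {C : ℝ} (hC : 0 < C)
    (hMA : ∀ s : Set (EuclideanSpace ℝ (Fin n)), MeasurableSet s →
      volume {y : EuclideanSpace ℝ (Fin n) | ∃ x ∈ s, ∀ z, u x + ⟪y, z - x⟫ ≤ u z} =
        ENNReal.ofReal C * volume s)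
    {x : EuclideanSpace ℝ (Fin n)} (hx : x ≠ 0) : (hess u x).det = C := by
  have hcont : ContinuousAt (fun y => (hess u y).det) x :=
    (Sm.det (sm_hess hu) x hx).continuousAt
  have hnn : 0 ≤ (hess u x).det := (hess_posSemidef hu hconv hx).det_nonneg
  have hvol : ∀ s : Set (EuclideanSpace ℝ (Fin n)), MeasurableSet s → (∀ y ∈ s, y ≠ 0) →
      volume (grad u '' s) = ENNReal.ofReal C * volume s := by
    intro s hs h0
    rw [← hMA s hs, subgrad_image hu hconv h0]
  have hder : ∀ s : Set (EuclideanSpace ℝ (Fin n)), (∀ y ∈ s, y ≠ 0) → ∀ y ∈ s,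
      HasFDerivWithinAt (grad u) (fderiv ℝ (grad u) y) s y := fun s h0 y hy =>
    ((contDiffAt_grad hu (h0 y hy)).differentiableAt (by simp)).hasFDerivAt.hasFDerivWithinAt
  have hlow : C ≤ (hess u x).det := by
    by_contra! hlt
    obtain ⟨c, hc1, hc2⟩ := exists_between hlt
    have hev : ∀ᶠ y in nhds x, |(hess u y).det| < c ∧ y ≠ 0 :=
      (hcont.abs.eventually_lt_const (by beta_reduce; rwa [abs_of_nonneg hnn])).and
        (isOpen_compl_singleton.mem_nhds hx)
    obtain ⟨r, hr, hball⟩ := Metric.eventually_nhds_iff_ball.1 hev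
    have h0 : ∀ y ∈ Metric.ball x r, y ≠ 0 := fun y hy => (hball y hy).2
    have hle := addHaar_image_le_lintegral_abs_det_fderiv volume
      (measurableSet_ball (x := x) (ε := r)) (hder _ h0)
    rw [hvol _ measurableSet_ball h0] at hle
    have hle2 : ∫⁻ y in Metric.ball x r, ENNReal.ofReal |(fderiv ℝ (grad u) y).det| ≤
        ENNReal.ofReal c * volume (Metric.ball x r) := by
      rw [← setLIntegral_const]
      refine setLIntegral_mono measurable_const fun y hy => ?_
      rw [det_fderiv_grad hu (h0 y hy)]
      exact ENNReal.ofReal_le_ofReal (hball y hy).1.le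
    have := (ENNReal.mul_le_mul_iff_left (Metric.measure_ball_pos volume x hr).ne'
      measure_ball_lt_top.ne).1 (hle.trans hle2)
    rw [ENNReal.ofReal_le_ofReal_iff (hnn.trans hc1.le)] at this
    linarith
  refine le_antisymm ?_ hlow
  by_contra! hlt
  obtain ⟨c, hc1, hc2⟩ := exists_between hlt
  have hstrict : HasStrictFDerivAt (grad u) (fderiv ℝ (grad u) x) x :=
    (contDiffAt_grad hu hx).hasStrictFDerivAt (by simp)
  have hdet0 : (fderiv ℝ (grad u) x).det ≠ 0 := by
    rw [det_fderiv_grad hu hx]; linarith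
  have heq : ((fderiv ℝ (grad u) x).toContinuousLinearEquivOfDetNeZero hdet0 :
      EuclideanSpace ℝ (Fin n) →L[ℝ] EuclideanSpace ℝ (Fin n)) = fderiv ℝ (grad u) x :=
    ContinuousLinearMap.coe_toContinuousLinearEquivOfDetNeZero _ _
  rw [← heq] at hstrict
  let Φ := hstrict.toOpenPartialHomeomorph
  have hΦ : (Φ : EuclideanSpace ℝ (Fin n) → EuclideanSpace ℝ (Fin n)) = grad u :=
    hstrict.toOpenPartialHomeomorph_coe
  have hev : ∀ᶠ y in nhds x, (c < |(hess u y).det| ∧ y ≠ 0) ∧ y ∈ Φ.source :=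
    ((hcont.abs.eventually_const_lt (by beta_reduce; rwa [abs_of_nonneg hnn])).and
      (isOpen_compl_singleton.mem_nhds hx)).and
      (Φ.open_source.mem_nhds hstrict.mem_toOpenPartialHomeomorph_source)
  obtain ⟨r, hr, hball⟩ := Metric.eventually_nhds_iff_ball.1 hev
  have h0 : ∀ y ∈ Metric.ball x r, y ≠ 0 := fun y hy => (hball y hy).1.2
  have hinj : Set.InjOn (grad u) (Metric.ball x r) := by
    rw [← hΦ]
    exact Φ.injOn.mono fun y hy => (hball y hy).2
  have hle := lintegral_abs_det_fderiv_eq_addHaar_image volume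
    (measurableSet_ball (x := x) (ε := r)) (hder _ h0) hinj
  rw [hvol _ measurableSet_ball h0] at hle
  have hle2 : ENNReal.ofReal c * volume (Metric.ball x r) ≤
      ∫⁻ y in Metric.ball x r, ENNReal.ofReal |(fderiv ℝ (grad u) y).det| := by
    rw [← setLIntegral_const]
    refine setLIntegral_mono' measurableSet_ball fun y hy => ?_
    rw [det_fderiv_grad hu (h0 y hy)]
    exact ENNReal.ofReal_le_ofReal (hball y hy).1.1.le
  have := (ENNReal.mul_le_mul_iff_left (Metric.measure_ball_pos volume x hr).ne'
    measure_ball_lt_top.ne).1 (hle2.trans hle.le)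
  rw [ENNReal.ofReal_le_ofReal_iff hC.le] at this
  linarith

end MongeAmpere

end Ellipsoid

/-! ### Constancy of the Hessian -/

open Ellipsoid Matrix in
/-- If `μ` is positively homogeneous of degree 1, smooth away from 0, `u = μ²` is convex
and its Monge–Ampère measure in the Alexandrov sense (the volume of the subgradient image)
is a constant `C > 0` times Lebesgue measure, then `u` is a positive definite quadratic
form and `Ω = {μ < 1}` is an ellipsoid. -/
theorem ellipsoid_of_constant_mongeAmpere (n : ℕ) (hn : 1 ≤ n)
    (μ : EuclideanSpace ℝ (Fin n) → ℝ)
    (hnn : ∀ x, 0 ≤ μ x)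
    (hhom : ∀ lam : ℝ, 0 < lam → ∀ x, μ (lam • x) = lam * μ x)
    (hsm : ContDiffOn ℝ (⊤ : ℕ∞) μ {0}ᶜ)
    (u : EuclideanSpace ℝ (Fin n) → ℝ) (hu : ∀ x, u x = (μ x) ^ 2)
    (hconv : ConvexOn ℝ Set.univ u)
    (C : ℝ) (hC : 0 < C)
    (hMA : ∀ s : Set (EuclideanSpace ℝ (Fin n)), MeasurableSet s →
      volume {y : EuclideanSpace ℝ (Fin n) | ∃ x ∈ s, ∀ z, u x + ⟪y, z - x⟫ ≤ u z} =
        ENNReal.ofReal C * volume s) :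
    ∃ A : Matrix (Fin n) (Fin n) ℝ, A.PosDef ∧ A.IsSymm ∧
      (∀ x : EuclideanSpace ℝ (Fin n), u x = ∑ i, ∑ j, A i j * x i * x j) ∧
      {x : EuclideanSpace ℝ (Fin n) | μ x < 1} =
        {x : EuclideanSpace ℝ (Fin n) | ∑ i, ∑ j, A i j * x i * x j < 1} := by
  have hsu : Sm u := by
    intro x hx
    have h1 : ContDiffAt ℝ (⊤ : ℕ∞) μ x := hsm.contDiffAt (isOpen_compl_singleton.mem_nhds hx)
    rw [funext hu]
    exact h1.pow 2
  have hom2 : Hom 2 u := by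
    intro lam hlam x _
    rw [hu, hu, hhom lam hlam, mul_pow]
  have h0 : u 0 = 0 := by
    have := hhom 2 two_pos 0
    rw [smul_zero] at this
    rw [hu, show μ 0 = 0 by linarith]
    norm_num
  have hcont : Continuous u := by
    rw [← continuousOn_univ]
    exact hconv.continuousOn isOpen_univ
  have hdet : ∀ x, x ≠ 0 → (hess u x).det = C := fun x hx => det_hess hsu hconv hC hMA hx
  have hPD : ∀ x, x ≠ 0 → (hess u x).PosDef := fun x hx => by
    rw [(hess_posSemidef hsu hconv hx).posDef_iff_isUnit, Matrix.isUnit_iff_isUnit_det, hdet x hx]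
    exact hC.ne'.isUnit
  have hom1 : ∀ i, Hom 1 (pd i u) := fun i => Hom.pd (m := 1) hsu hom2 i
  have hom0 : ∀ i j, Hom 0 (fun y => hess u y i j) := fun i j =>
    Hom.pd (m := 0) (hsu.pd j) (hom1 j) i
  have hEuler : ∀ x, x ≠ 0 → ∀ i, pd i u x = ∑ j, hess u x i j * x j := by
    intro x hx i
    have := (hom1 i).euler (hsu.pd i) hx
    rw [Nat.cast_one, one_mul] at this
    rw [← this]
    refine Finset.sum_congr rfl fun j _ => ?_
    rw [hess_symm hsu hx i j, mul_comm]
    rfl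
  have hEuler0 : ∀ x, x ≠ 0 → ∀ k, ∑ j, x j * pd j (fun y => hess u y k k) x = 0 := by
    intro x hx k
    have := (hom0 k k).euler (sm_hess hsu k k) hx
    rwa [Nat.cast_zero, zero_mul] at this
  have hquad : ∀ x, x ≠ 0 → u x = 2⁻¹ * (x ⬝ᵥ hess u x *ᵥ x) := by
    intro x hx
    have h2 := hom2.euler hsu hx
    have h3 : x ⬝ᵥ hess u x *ᵥ x = ∑ j, x j * pd j u x := by
      simp [Matrix.mulVec, dotProduct, hEuler x hx]
    rw [h3, h2]
    push_cast
    ring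
  have hpos : ∀ x, x ≠ 0 → 0 < u x := by
    intro x hx
    have hx' : (x : Fin n → ℝ) ≠ 0 := fun h => hx (by ext i; exact congrFun h i)
    have := (hPD x hx).dotProduct_mulVec_pos hx'
    rw [hquad x hx]
    simp only [star_trivial] at this
    positivity
  have : Nonempty (Fin n) := ⟨⟨0, hn⟩⟩
  have hbdd : ∀ b, Bornology.IsBounded {x | u x ≤ b} := by
    intro b
    obtain ⟨p, hp, hmin⟩ := (isCompact_sphere (0 : EuclideanSpace ℝ (Fin n)) 1).exists_isMinOn
      (NormedSpace.sphere_nonempty.2 zero_le_one) hcont.continuousOn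
    have hp0 : p ≠ 0 := ne_zero_of_mem_unit_sphere ⟨p, hp⟩
    refine (Metric.isBounded_closedBall (x := 0) (r := √(b / u p))).subset fun x hx => ?_
    rw [mem_closedBall_zero_iff]
    by_cases hx0 : x = 0
    · simp [hx0]
    have hnx : 0 < ‖x‖ := norm_pos_iff.2 hx0
    have h1 : u p ≤ u (‖x‖⁻¹ • x) := hmin (by simp [norm_smul, hnx.ne'])
    rw [hom2 _ (inv_pos.2 hnx) x hx0] at h1
    refine Real.le_sqrt_of_sq_le ?_
    rw [le_div_iff₀ (hpos p hp0)]
    have hxb : u x ≤ b := hx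
    calc ‖x‖ ^ 2 * u p ≤ ‖x‖ ^ 2 * (‖x‖⁻¹ ^ 2 * u x) := by gcongr
      _ = u x := by field_simp
      _ ≤ b := hxb
  have hthird : ∀ x, x ≠ 0 → ∀ k, third u k x = 0 := fun x hx k =>
    third_eq_zero hsu hC.ne' hdet hcont h0 hpos hbdd hPD hEuler hEuler0 hx k
  -- the Hessian is constant: in dimension one it equals its determinant, and in higher dimension
  -- the complement of the origin is connected
  obtain ⟨H, hH⟩ : ∃ H : Matrix (Fin n) (Fin n) ℝ, ∀ x, x ≠ 0 → hess u x = H := by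
    rcases Nat.eq_or_lt_of_le hn with rfl | hn2
    · refine ⟨Matrix.of fun _ _ => C, fun x hx => ?_⟩
      ext i j
      have := hdet x hx
      rw [Matrix.det_fin_one] at this
      rw [Subsingleton.elim i 0, Subsingleton.elim j 0, this]
      rfl
    · have hrank : 1 < Module.rank ℝ (EuclideanSpace ℝ (Fin n)) := by
        rw [← Module.finrank_eq_rank, finrank_euclideanSpace_fin]
        exact_mod_cast hn2
      have hc : ∀ i j, ∃ a, ∀ x ∈ ({0}ᶜ : Set (EuclideanSpace ℝ (Fin n))), hess u x i j = a := by
        intro i j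
        refine isOpen_compl_singleton.exists_is_const_of_fderiv_eq_zero (𝕜 := ℝ)
          (isConnected_compl_singleton_of_one_lt_rank hrank 0).isPreconnected
          (fun x hx => ((sm_hess hsu i j).differentiableAt hx).differentiableWithinAt)
          fun x hx => ?_
        ext v
        rw [fderiv_apply_eq]
        refine Finset.sum_eq_zero fun k _ => ?_
        have : pd k (fun y => hess u y i j) x = 0 :=
          congrFun (congrFun (hthird x hx k) i) j
        rw [this, mul_zero]
      choose H hH using hc
      exact ⟨Matrix.of H, fun x hx => by ext i j; exact hH i j x hx⟩
  obtain ⟨p, hp⟩ : ∃ p : EuclideanSpace ℝ (Fin n), p ≠ 0 := exists_ne 0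
  have hHPD : H.PosDef := hH p hp ▸ hPD p hp
  have hform : ∀ x : EuclideanSpace ℝ (Fin n),
      u x = ∑ i, ∑ j, ((2⁻¹ : ℝ) • H) i j * x i * x j := by
    intro x
    by_cases hx : x = 0
    · simp [hx, h0]
    · rw [hquad x hx, hH x hx]
      simp only [Matrix.mulVec, dotProduct, Finset.mul_sum, Matrix.smul_apply, smul_eq_mul]
      refine Finset.sum_congr rfl fun i _ => Finset.sum_congr rfl fun j _ => ?_
      ring
  have hA : ((2⁻¹ : ℝ) • H).PosDef := hHPD.smul (by norm_num)
  refine ⟨(2⁻¹ : ℝ) • H, hA, ?_, hform, ?_⟩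
  · have := hA.isHermitian
    rwa [Matrix.IsHermitian, Matrix.conjTranspose_eq_transpose_of_trivial] at this
  · ext x
    simp only [Set.mem_ofPred_eq]
    rw [← hform, hu, sq_lt_one_iff₀ (hnn x)]
end
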